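/- Sharp Sobolev inequality on the hyperbolic plane (Theorem 3.2, inequality part): Let k > 1/2 and q ≥ 2 be real numbers with kq > 2, and set p = q + 1/k. Let f : D → ℂ be bounded with lim_{|ζ|→1} f(ζ) = 0, such that |f|^{q/2} is weakly differentiable with ∫_D |∇(|f|^{q/2})|² dA < ∞ and ∫_D |f|^p dν_k < ∞. Then ∫_D |f|^q dν_k + (4/(kq(kq−2))) · ((2k−1)/(4π)) ∫_D |∇(|f|^{q/2})|² dA ≥ ((2k−1)/(kq−1)) · ((kp−1)/(2k−1))^{q/p} · ((kq−1)/(kq−2)) · (∫_D |f|^p dν_k)^{q/p}. -/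

import Mathlib

open MeasureTheory Metric

/-- The measure `ν_k` on the unit disc `D ⊆ ℂ`, with density
`((2k−1)/π)(1−|ζ|²)^{−2}` with respect to Lebesgue measure. -/
noncomputable def nuMeasure (k : ℝ) : Measure ℂ :=
  (volume.restrict (ball (0 : ℂ) 1)).withDensity
    (fun ζ => ENNReal.ofReal ((2 * k - 1) / Real.pi * ((1 - ‖ζ‖ ^ 2) ^ 2)⁻¹))

lemma young_aux (s x w : ℝ) (hs : 2 ≤ s) (hx : 0 < x) (hw : 0 < w) :
    (s + 1) * x ≤ x ^ (s + 1) / w + s * w ^ (1 / s) := by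
  have hs0 : 0 < s := by linarith
  set e := w ^ (1 / s) with he
  have he0 : 0 < e := Real.rpow_pos_of_pos hw _
  have hwe : w = e ^ s := by
    rw [he, ← Real.rpow_mul hw.le]; field_simp; simp
  have hb := one_add_mul_self_le_rpow_one_add (s := x / e - 1) (p := s + 1)
    (by have : 0 < x / e := by positivity
        linarith) (by linarith)
  have h1 : (1 + (x / e - 1)) = x / e := by ring
  rw [h1, Real.div_rpow hx.le he0.le, Real.rpow_add he0, Real.rpow_one, ← hwe] at hb
  have h2 : x ^ (s + 1) / (w * e) * e = x ^ (s + 1) / w := by field_simp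
  have := mul_le_mul_of_nonneg_right hb he0.le
  rw [h2] at this
  have h3 : (1 + (s + 1) * (x / e - 1)) * e = (s+1) * x - s * e := by field_simp; ring
  linarith

lemma bern_neg (s z : ℝ) (hs : 2 ≤ s) (hz : 0 < z) : 1 + s - s * z ≤ z ^ (-s) := by
  have h1 : z ^ (-s) = Real.exp (Real.log z * (-s)) := Real.rpow_def_of_pos hz _
  have h2 := Real.add_one_le_exp (Real.log z * (-s))
  have h3 := Real.log_le_sub_one_of_pos hz
  rw [h1]
  nlinarith

lemma sos_aux (M T : ℝ) (hM : 0 < M) (hT : 0 < T) :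
    2 * Real.sqrt (Real.sqrt (T * (1 + T) / (M * (1 + M)))) ≤
      (2 * M + 1) * Real.sqrt (T * (1 + T) / (M * (1 + M))) - 2 * T + (1 + T) / (1 + M) := by
  set e := Real.sqrt ((1 + T) / (1 + M)) with he
  set r := Real.sqrt (T / M) with hr
  have he0 : 0 < e := Real.sqrt_pos.2 (by positivity)
  have hr0 : 0 < r := Real.sqrt_pos.2 (by positivity)
  have he2 : e ^ 2 = (1 + T) / (1 + M) := Real.sq_sqrt (by positivity)
  have hr2 : r ^ 2 = T / M := Real.sq_sqrt (by positivity)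
  have hw : Real.sqrt (T * (1 + T) / (M * (1 + M))) = r * e := by
    rw [he, hr, ← Real.sqrt_mul (by positivity)]; congr 1; field_simp
  rw [hw, ← he2]
  have hT' : T = r ^ 2 * M := by rw [hr2]; field_simp
  have hrel : M * (e ^ 2 - r ^ 2) = 1 - e ^ 2 := by rw [he2, hr2]; field_simp; ring
  set κ := Real.sqrt (r / e) with hκ
  have hκ0 : 0 < κ := Real.sqrt_pos.2 (by positivity)
  have hκ2 : r = κ ^ 2 * e := by rw [hκ, Real.sq_sqrt (by positivity)]; field_simp
  have hsq : Real.sqrt (r * e) = κ * e := by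
    rw [show r * e = (κ * e) ^ 2 by rw [hκ2]; ring]; exact Real.sqrt_sq (by positivity)
  rw [hsq, hT', hκ2]
  rw [hκ2] at hrel
  -- e^2 M (1-κ^4) = 1 - e^2
  have h1 : M * e ^ 2 * (1 - κ ^ 2) * (1 + κ ^ 2) = 1 - e ^ 2 := by rw [← hrel]; ring
  have key : 0 ≤ (1 + κ ^ 2) * ((2 * M + 1) * (κ ^ 2 * e * e) - 2 * ((κ ^ 2 * e) ^ 2 * M) + e ^ 2 - 2 * (κ * e)) := by
    have : (1 + κ ^ 2) * ((2 * M + 1) * (κ ^ 2 * e * e) - 2 * ((κ ^ 2 * e) ^ 2 * M) + e ^ 2 - 2 * (κ * e))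
      = (e - κ) ^ 2 + κ ^ 2 * (1 - κ * e) ^ 2 := by
      linear_combination (2 * κ ^ 2) * h1
    rw [this]; positivity
  have := nonneg_of_mul_nonneg_right key (by positivity)
  linarith

/-- Key scalar inequality. `b = 1 + m`, `I ∈ (0,1)`, `U > 0`. -/
lemma pointwise_aux (s m T x : ℝ) (hs : 2 ≤ s) (hm : 0 < m) (hT : 0 < T) (hx : 0 < x) :
    (s + 1 / (s + 1)) * x + 2 * (1 + T) ≤ s + (2 * m + 1) * Real.sqrt (T * (1 + T) / (m * (1 + m)))
      + x ^ (s + 1) / Real.sqrt (T * (1 + T) / (m * (1 + m)))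
      + 1 / (s + 1) * ((1 + T) / (1 + m)) ^ (s + 1) * x ^ (-s) := by
  set w := Real.sqrt (T * (1 + T) / (m * (1 + m))) with hw
  have hw0 : 0 < w := Real.sqrt_pos.2 (by positivity)
  have h1 := young_aux s x w hs hx hw0
  set r := (1 + T) / (1 + m) with hr
  have hr0 : 0 < r := by positivity
  have h2 := bern_neg s (x / r) hs (by positivity)
  have h3 : r ^ (s + 1) * x ^ (-s) = r * (x / r) ^ (-s) := by
    rw [Real.div_rpow hx.le hr0.le, Real.rpow_add hr0, Real.rpow_neg hr0.le, Real.rpow_one]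
    field_simp
  have h4 := sos_aux m T hm hT
  rw [← hw, ← hr] at h4
  have h5 : 1 + s / 2 * (w ^ (1 / s) - 1) ≤ Real.sqrt w := by
    have := one_add_mul_self_le_rpow_one_add (s := w ^ (1 / s) - 1) (p := s / 2)
      (by have := Real.rpow_pos_of_pos hw0 (1 / s); linarith) (by linarith)
    rw [show 1 + (w ^ (1 / s) - 1) = w ^ (1 / s) by ring, ← Real.rpow_mul hw0.le,
      show 1 / s * (s / 2) = 1 / 2 by field_simp, ← Real.sqrt_eq_rpow] at this
    exact this
  have h6 : r - s / (s + 1) * x ≤ 1 / (s + 1) * (r ^ (s + 1) * x ^ (-s)) := by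
    rw [h3]
    have h7 : 1 / (s + 1) * (r * (1 + s - s * (x / r))) ≤ 1 / (s + 1) * (r * (x / r) ^ (-s)) := by
      gcongr
    have h8 : 1 / (s + 1) * (r * (1 + s - s * (x / r))) = r - s / (s + 1) * x := by
      field_simp; ring
    linarith
  have h9 : (s + 1 / (s + 1)) * x + s / (s + 1) * x = (s + 1) * x := by field_simp; ring
  have h10 : 1 / (s + 1) * r ^ (s + 1) * x ^ (-s) = 1 / (s + 1) * (r ^ (s + 1) * x ^ (-s)) := by ring
  rw [h10]
  nlinarith

/-- mass function -/
noncomputable def massI (s : ℝ) (U : ℝ → ℝ) (m : ℝ) : ℝ :=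
  1 - s * ∫ τ in (0 : ℝ)..m, U τ ^ (2 + 2 / s)

noncomputable def Nfun (s : ℝ) (U : ℝ → ℝ) (m : ℝ) : ℝ :=
  Real.sqrt (m * (1 + m)) * Real.sqrt (1 - massI s U m ^ (1 / s))

noncomputable def nfun (s : ℝ) (U : ℝ → ℝ) (m : ℝ) : ℝ :=
  (2 * m + 1) / (2 * Real.sqrt (m * (1 + m))) * Real.sqrt (1 - massI s U m ^ (1 / s))
  + Real.sqrt (m * (1 + m)) * (massI s U m ^ (1 / s - 1) * U m ^ (2 + 2 / s)
      / (2 * Real.sqrt (1 - massI s U m ^ (1 / s))))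

structure GoodU (s : ℝ) (U : ℝ → ℝ) : Prop where
  hs : 2 ≤ s
  nonneg : ∀ m, 0 ≤ U m
  anti : Antitone U
  rc : ∀ m, ContinuousWithinAt U (Set.Ici m) m
  mass : ∫⁻ m in Set.Ioi (0 : ℝ), ENNReal.ofReal (U m ^ (2 + 2 / s)) = ENNReal.ofReal (1 / s)

namespace GoodU
variable {s : ℝ} {U : ℝ → ℝ}

lemma spos (h : GoodU s U) : 0 < s := by linarith [h.hs]
lemma ppos (h : GoodU s U) : 0 < 2 + 2 / s := by have := h.spos; positivity

lemma antip (h : GoodU s U) : Antitone (fun τ => U τ ^ (2 + 2 / s)) := fun _ _ hab =>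
  Real.rpow_le_rpow (h.nonneg _) (h.anti hab) h.ppos.le

lemma ii (h : GoodU s U) (a b : ℝ) : IntervalIntegrable (fun τ => U τ ^ (2 + 2 / s)) volume a b :=
  h.antip.intervalIntegrable

lemma meas (h : GoodU s U) : Measurable U := h.anti.measurable

lemma int_eq (h : GoodU s U) (a b : ℝ) (hab : a ≤ b) : ENNReal.ofReal (∫ τ in a..b, U τ ^ (2 + 2 / s)) =
    ∫⁻ τ in Set.Ioc a b, ENNReal.ofReal (U τ ^ (2 + 2 / s)) := by
  rw [intervalIntegral.integral_of_le hab]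
  exact ofReal_integral_eq_lintegral_ofReal ((intervalIntegrable_iff_integrableOn_Ioc_of_le hab).1 (h.ii a b))
    (Filter.Eventually.of_forall fun τ => Real.rpow_nonneg (h.nonneg _) _)

lemma massI_nonneg (h : GoodU s U) (m : ℝ) (hm : 0 ≤ m) : 0 ≤ massI s U m := by
  have h1 : ENNReal.ofReal (∫ τ in (0:ℝ)..m, U τ ^ (2 + 2 / s)) ≤ ENNReal.ofReal (1 / s) := by
    rw [h.int_eq 0 m hm, ← h.mass]
    exact lintegral_mono_set Set.Ioc_subset_Ioi_self
  have hs := h.spos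
  rw [ENNReal.ofReal_le_ofReal_iff (by positivity)] at h1
  unfold massI
  have : s * ∫ τ in (0:ℝ)..m, U τ ^ (2 + 2 / s) ≤ s * (1 / s) := by gcongr
  have h2 : s * (1 / s) = 1 := by field_simp
  linarith

lemma int_lower (h : GoodU s U) (a b : ℝ) (hab : a ≤ b) :
    (b - a) * U b ^ (2 + 2 / s) ≤ ∫ τ in a..b, U τ ^ (2 + 2 / s) := by
  have : ∫ τ in a..b, U b ^ (2 + 2 / s) ≤ ∫ τ in a..b, U τ ^ (2 + 2 / s) := by
    apply intervalIntegral.integral_mono_on hab (by simp) (h.ii a b)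
    intro τ hτ
    exact h.antip hτ.2
  simpa using this

lemma massI_lt_one (h : GoodU s U) (m : ℝ) (hm : 0 < m) (hU : 0 < U m) : massI s U m < 1 := by
  have h1 := h.int_lower 0 m hm.le
  have h2 : 0 < U m ^ (2 + 2 / s) := Real.rpow_pos_of_pos hU _
  have hs := h.spos
  unfold massI
  have : 0 < s * ∫ τ in (0:ℝ)..m, U τ ^ (2 + 2 / s) := by
    apply mul_pos hs
    nlinarith
  linarith

lemma massI_le_one (h : GoodU s U) (m : ℝ) (hm : 0 ≤ m) : massI s U m ≤ 1 := by
  have h1 := h.int_lower 0 m hm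
  have h2 : 0 ≤ U m ^ (2 + 2 / s) := Real.rpow_nonneg (h.nonneg _) _
  have hs := h.spos
  unfold massI
  have : 0 ≤ s * ∫ τ in (0:ℝ)..m, U τ ^ (2 + 2 / s) := by
    apply mul_nonneg hs.le
    nlinarith
  linarith

lemma massI_sub (h : GoodU s U) (a b : ℝ) :
    massI s U a - massI s U b = s * ∫ τ in a..b, U τ ^ (2 + 2 / s) := by
  unfold massI
  rw [← intervalIntegral.integral_add_adjacent_intervals (h.ii 0 a) (h.ii a b)]
  ring

lemma massI_anti (h : GoodU s U) (a b : ℝ) (hab : a ≤ b) : massI s U b ≤ massI s U a := by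
  have h1 := h.massI_sub a b
  have h2 := h.int_lower a b hab
  have h3 : 0 ≤ U b ^ (2 + 2 / s) := Real.rpow_nonneg (h.nonneg _) _
  have hs := h.spos
  have : 0 ≤ s * ∫ τ in a..b, U τ ^ (2 + 2 / s) := by
    apply mul_nonneg hs.le
    nlinarith
  linarith

lemma massI_pos (h : GoodU s U) (m : ℝ) (hm : 0 ≤ m) (hU : 0 < U m) : 0 < massI s U m := by
  have h1 : ∀ᶠ x in nhdsWithin m (Set.Ici m), 0 < U x := (h.rc m).eventually (lt_mem_nhds hU)
  have h2 : ∀ᶠ x in nhdsWithin m (Set.Ioi m), 0 < U x :=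
    h1.filter_mono (nhdsWithin_mono _ Set.Ioi_subset_Ici_self)
  obtain ⟨x, hx, hmx⟩ := (h2.and self_mem_nhdsWithin).exists
  have hmx' : m < x := hmx
  have h3 := h.massI_sub m x
  have h4 := h.int_lower m x hmx'.le
  have h5 := h.massI_nonneg x (hm.trans hmx'.le)
  have h6 : 0 < U x ^ (2 + 2 / s) := Real.rpow_pos_of_pos hx _
  have : 0 < s * ∫ τ in m..x, U τ ^ (2 + 2 / s) := by
    apply mul_pos h.spos
    nlinarith
  linarith

lemma massI_cont (h : GoodU s U) : Continuous (massI s U) := by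
  unfold massI
  have := intervalIntegral.continuous_primitive (fun a b => h.ii a b) 0
  fun_prop

lemma Nfun_cont (h : GoodU s U) : Continuous (Nfun s U) := by
  unfold Nfun
  have h1 := h.massI_cont
  have h2 : Continuous fun m => massI s U m ^ (1 / s) :=
    h1.rpow_const (fun _ => Or.inr (by have := h.spos; positivity))
  fun_prop

lemma massI_deriv (h : GoodU s U) (m : ℝ) :
    HasDerivWithinAt (massI s U) (- (s * U m ^ (2 + 2 / s))) (Set.Ioi m) m := by
  have hc : ContinuousWithinAt (fun τ => U τ ^ (2 + 2 / s)) (Set.Ioi m) m :=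
    (((h.rc m).mono Set.Ioi_subset_Ici_self).rpow_const (Or.inr h.ppos.le))
  have := intervalIntegral.integral_hasDerivWithinAt_right (h.ii 0 m) (s := Set.Ici m) (t := Set.Ioi m)
    (h.antip.measurable.stronglyMeasurable.stronglyMeasurableAtFilter) hc
  have h2 := ((this.mono Set.Ioi_subset_Ici_self).const_mul s).const_sub 1
  exact h2

lemma Nfun_deriv (h : GoodU s U) (m : ℝ) (hm : 0 < m) (hU : 0 < U m) :
    HasDerivWithinAt (Nfun s U) (nfun s U m) (Set.Ioi m) m := by
  have hI0 := h.massI_pos m hm.le hU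
  have hI1 := h.massI_lt_one m hm hU
  have hs := h.spos
  have hy : 0 < 1 - massI s U m ^ (1 / s) := by
    have := Real.rpow_lt_one hI0.le hI1 (z := 1 / s) (by positivity)
    linarith
  have h1 := h.massI_deriv m
  have h2 := (h1.rpow_const (p := 1 / s) (Or.inl hI0.ne')).const_sub 1
  have h3 := h2.sqrt hy.ne'
  have h4 : HasDerivWithinAt (fun m : ℝ => Real.sqrt (m * (1 + m)))
      ((2 * m + 1) / (2 * Real.sqrt (m * (1 + m)))) (Set.Ioi m) m := by
    have : HasDerivAt (fun m : ℝ => m * (1 + m)) (2 * m + 1) m := by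
      have := (hasDerivAt_id m).mul ((hasDerivAt_id m).const_add 1)
      refine this.congr_deriv ?_
      simp only [id]; ring
    exact (this.sqrt (by positivity)).hasDerivWithinAt
  have h5 := h4.mul h3
  refine h5.congr_deriv ?_
  unfold nfun
  congr 2
  field_simp

lemma nfun_nonneg (h : GoodU s U) (m : ℝ) (hm : 0 < m) : 0 ≤ nfun s U m := by
  have := h.massI_nonneg m hm.le
  have := h.nonneg m
  unfold nfun
  positivity

lemma nfun_int (h : GoodU s U) (L : ℝ) (hL : 0 ≤ L) (hU : ∀ m, 0 < m → m < L → 0 < U m) :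
    ∫⁻ m in Set.Ioo 0 L, ENNReal.ofReal (nfun s U m) ≤ ENNReal.ofReal (Nfun s U L) := by
  have hd : ∀ x ∈ Set.Ioo (0:ℝ) L, HasDerivWithinAt (Nfun s U) (nfun s U x) (Set.Ioi x) x :=
    fun x hx => h.Nfun_deriv x hx.1 (hU x hx.1 hx.2)
  have hi := intervalIntegral.integrableOn_deriv_right_of_nonneg (h.Nfun_cont.continuousOn) hd
    (fun x hx => h.nfun_nonneg x hx.1)
  have he := intervalIntegral.integral_eq_sub_of_hasDeriv_right_of_le hL (h.Nfun_cont.continuousOn) hd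
    ((intervalIntegrable_iff_integrableOn_Ioc_of_le hL).2 hi)
  have h0 : Nfun s U 0 = 0 := by simp [Nfun]
  rw [h0, sub_zero, intervalIntegral.integral_of_le hL, integral_Ioc_eq_integral_Ioo] at he
  rw [← he, ofReal_integral_eq_lintegral_ofReal (hi.mono_set Set.Ioo_subset_Ioc_self)]
  exact (ae_restrict_mem measurableSet_Ioo).mono fun x hx => h.nfun_nonneg x hx.1

lemma pointwise (h : GoodU s U) (m : ℝ) (hm : 0 < m) :
    2 * U m ^ 2 + (s + 1 / (s + 1)) * U m ^ (2 + 2 / s) ≤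
      2 * (nfun s U m * U m ^ 2) + s * (massI s U m ^ (1 / s) * U m ^ 2)
        + 1 / (s + 1) * (1 + m) ^ (-(s + 1)) := by
  have hs := h.spos
  rcases (h.nonneg m).eq_or_lt with hU | hU
  · rw [← hU, Real.zero_rpow h.ppos.ne']
    simp
    positivity
  have hI0 := h.massI_pos m hm.le hU
  have hI1 := h.massI_lt_one m hm hU
  set I := massI s U m with hI
  set e := I ^ (1 / s) with he
  have he0 : 0 < e := Real.rpow_pos_of_pos hI0 _
  have he1 : e < 1 := Real.rpow_lt_one hI0.le hI1 (by positivity)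
  have hIe : I = e ^ s := by rw [he, ← Real.rpow_mul hI0.le]; field_simp; simp
  set y := U m ^ (2 / s) with hy
  have hy0 : 0 < y := Real.rpow_pos_of_pos hU _
  have hU2 : U m ^ 2 = y ^ s := by
    rw [hy, ← Real.rpow_mul hU.le]; field_simp; norm_num
  have hUp : U m ^ (2 + 2 / s) = y ^ s * y := by
    rw [← hU2, Real.rpow_add hU, ← hy]; norm_num
  have hys : 0 < y ^ s := Real.rpow_pos_of_pos hy0 _
  set T := 1 / e - 1 with hT
  have hT0 : 0 < T := by rw [hT, sub_pos, lt_div_iff₀ he0]; linarith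
  have ha : 1 + T = 1 / e := by rw [hT]; ring
  have key := pointwise_aux s m T (y / e) h.hs hm hT0 (by positivity)
  set S := Real.sqrt (m * (1 + m)) with hS
  have hS0 : 0 < S := Real.sqrt_pos.2 (by positivity)
  set q := Real.sqrt (1 - e) with hq
  have hq0 : 0 < q := Real.sqrt_pos.2 (by linarith)
  have hw : Real.sqrt (T * (1 + T) / (m * (1 + m))) = q / e / S := by
    rw [Real.sqrt_div (by positivity), ← hS]
    congr 1
    rw [ha, hT, show (1 / e - 1) * (1 / e) = (1 - e) / e ^ 2 by field_simp, Real.sqrt_div (by linarith),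
      Real.sqrt_sq he0.le]
  rw [hw, ha] at key
  have hes : 0 < e ^ s := Real.rpow_pos_of_pos he0 _
  have hn : nfun s U m = (2 * m + 1) / (2 * S) * q + S * (e / I * (y ^ s * y) / (2 * q)) := by
    have h9 : I ^ (1 / s - 1) = e / I := by
      rw [Real.rpow_sub hI0, Real.rpow_one]
    unfold nfun
    rw [← hI, ← he, ← hS, ← hq, hUp, h9]
  have h1 : (y / e) ^ (s + 1) = (y ^ s * y) / (I * e) := by
    rw [Real.div_rpow hy0.le he0.le, Real.rpow_add hy0, Real.rpow_add he0, ← hIe]; simp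
  have hb : (0 : ℝ) < 1 + m := by linarith
  have h2 : (1 / e / (1 + m)) ^ (s + 1) * (y / e) ^ (-s) = (1 + m) ^ (-(s + 1)) / (e * y ^ s) := by
    rw [Real.div_rpow (by positivity) hb.le, Real.div_rpow hy0.le he0.le, Real.div_rpow (by norm_num) he0.le,
      Real.rpow_neg hb.le, Real.rpow_neg hy0.le, Real.rpow_neg he0.le, Real.rpow_add he0, Real.one_rpow,
      Real.rpow_one]
    field_simp
  rw [mul_assoc (1 / (s + 1)), h2, h1] at key
  have key2 := mul_le_mul_of_nonneg_right key (by positivity : 0 ≤ e * y ^ s)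
  rw [hn, hU2, hUp]
  clear h1 h2 hes hn
  clear_value q S T y e I
  generalize y ^ s = Y at *
  generalize (1 + m) ^ (-(s + 1)) = B at *
  have hs1 : s + 1 ≠ 0 := by linarith
  have e1 : ((s + 1 / (s + 1)) * (y / e) + 2 * (1 / e)) * (e * Y)
      = 2 * Y + (s + 1 / (s + 1)) * (Y * y) := by
    generalize s + 1 / (s + 1) = c
    field_simp
    ring
  have e2 : (s + (2 * m + 1) * (q / e / S) + Y * y / (I * e) / (q / e / S) +
        1 / (s + 1) * (B / (e * Y))) * (e * Y) =
      2 * (((2 * m + 1) / (2 * S) * q + S * (e / I * (Y * y) / (2 * q))) * Y) + s * (e * Y) +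
      1 / (s + 1) * B := by
    generalize 1 / (s + 1) = c
    field_simp
    ring
  rw [e1, e2] at key2
  exact key2

end GoodU

lemma lint_add_rpow (s : ℝ) (hs : 0 < s) :
    ∫⁻ m in Set.Ioi (0 : ℝ), ENNReal.ofReal ((1 + m) ^ (-(s + 1))) = ENNReal.ofReal (1 / s) := by
  have hd : ∀ x ∈ Set.Ici (0:ℝ), HasDerivAt (fun m : ℝ => - (1 / s) * (1 + m) ^ (-s)) ((1 + x) ^ (-(s + 1))) x := by
    intro x hx
    have hx' : (0:ℝ) < 1 + x := by have : (0:ℝ) ≤ x := hx; linarith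
    have := (((hasDerivAt_id x).const_add 1).rpow_const (p := -s) (Or.inl hx'.ne')).const_mul (-(1 / s))
    refine this.congr_deriv ?_
    simp only [id]
    rw [show -(s + 1) = -s - 1 by ring]
    field_simp
  have hlim : Filter.Tendsto (fun m : ℝ => - (1 / s) * (1 + m) ^ (-s)) Filter.atTop (nhds 0) := by
    have h1 := (tendsto_rpow_neg_atTop hs).comp (Filter.tendsto_atTop_add_const_left Filter.atTop (1:ℝ) Filter.tendsto_id)
    simpa using h1.const_mul (-(1/s))
  have hnn : ∀ x ∈ Set.Ioi (0:ℝ), 0 ≤ ((1 + x) ^ (-(s + 1)) : ℝ) := by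
    intro x hx
    have : (0:ℝ) < x := hx
    positivity
  have hi := integrableOn_Ioi_deriv_of_nonneg' hd hnn hlim
  have he := integral_Ioi_of_hasDerivAt_of_nonneg' hd hnn hlim
  rw [← ofReal_integral_eq_lintegral_ofReal hi, he]
  · simp
  · exact (ae_restrict_mem measurableSet_Ioi).mono hnn

namespace GoodU
variable {s : ℝ} {U : ℝ → ℝ}

lemma nfun_meas (h : GoodU s U) : Measurable (nfun s U) := by
  have h1 := h.massI_cont.measurable
  have h2 := h.meas
  unfold nfun
  fun_prop

lemma int_ineq (h : GoodU s U) :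
    2 * (∫⁻ m in Set.Ioi (0:ℝ), ENNReal.ofReal (U m ^ 2)) + 1 ≤
      2 * (∫⁻ m in Set.Ioi (0:ℝ), ENNReal.ofReal (nfun s U m * U m ^ 2)) +
      ENNReal.ofReal s * (∫⁻ m in Set.Ioi (0:ℝ), ENNReal.ofReal (massI s U m ^ (1 / s) * U m ^ 2)) := by
  have h1 := h.massI_cont.measurable
  have h2 := h.meas
  have h3 := h.nfun_meas
  have hs := h.spos
  have key : ∫⁻ m in Set.Ioi (0:ℝ), (2 * ENNReal.ofReal (U m ^ 2) + ENNReal.ofReal (s + 1 / (s + 1)) * ENNReal.ofReal (U m ^ (2 + 2 / s)))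
      ≤ ∫⁻ m in Set.Ioi (0:ℝ), (2 * ENNReal.ofReal (nfun s U m * U m ^ 2) + ENNReal.ofReal s * ENNReal.ofReal (massI s U m ^ (1 / s) * U m ^ 2)
        + ENNReal.ofReal (1 / (s + 1)) * ENNReal.ofReal ((1 + m) ^ (-(s + 1)))) := by
    apply setLIntegral_mono' measurableSet_Ioi
    intro m hm
    have hm' : 0 < m := hm
    have hp := h.pointwise m hm'
    have hI := h.massI_nonneg m hm'.le
    have hU := h.nonneg m
    have hn := h.nfun_nonneg m hm'
    have two : (2 : ENNReal) = ENNReal.ofReal 2 := by simp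
    rw [two]
    simp_rw [← ENNReal.ofReal_mul (show (0:ℝ) ≤ 2 by norm_num), ← ENNReal.ofReal_mul hs.le]
    rw [← ENNReal.ofReal_mul (by positivity), ← ENNReal.ofReal_mul (by positivity),
      ← ENNReal.ofReal_add (by positivity) (by positivity),
      ← ENNReal.ofReal_add (by positivity) (by positivity),
      ← ENNReal.ofReal_add (by positivity) (by positivity)]
    exact ENNReal.ofReal_le_ofReal hp
  rw [lintegral_add_left (by fun_prop), lintegral_add_left (by fun_prop), lintegral_add_left (by fun_prop),
    lintegral_const_mul _ (by fun_prop), lintegral_const_mul _ (by fun_prop), lintegral_const_mul _ (by fun_prop),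
    lintegral_const_mul _ (by fun_prop), lintegral_const_mul _ (by fun_prop), lint_add_rpow s hs, h.mass,
    ← ENNReal.ofReal_mul (by positivity), ← ENNReal.ofReal_mul (by positivity)] at key
  rw [show (s + 1 / (s + 1)) * (1 / s) = 1 + 1 / (s+1) * (1 / s) by field_simp,
    ENNReal.ofReal_add (by positivity) (by positivity), ← add_assoc, ENNReal.ofReal_one] at key
  exact (ENNReal.add_le_add_iff_right ENNReal.ofReal_ne_top).1 key

end GoodU

section rearr
variable {α : Type*} [MeasurableSpace α]

/-- distribution function -/
noncomputable def Mf (μ : Measure α) (u : α → ℝ) (t : ℝ) : ENNReal := μ {x | t < u x}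

/-- decreasing rearrangement -/
noncomputable def Uf (μ : Measure α) (u : α → ℝ) (m : ℝ) : ℝ :=
  sSup {t : ℝ | 0 ≤ t ∧ ENNReal.ofReal m < Mf μ u t}

lemma Mf_anti (μ : Measure α) (u : α → ℝ) : Antitone (Mf μ u) := fun _ _ hab =>
  measure_mono fun _ hx => lt_of_le_of_lt hab hx

lemma Mf_meas (μ : Measure α) (u : α → ℝ) : Measurable (Mf μ u) := (Mf_anti μ u).measurable

lemma Mf_rc (μ : Measure α) (u : α → ℝ) (t : ℝ) (r : ENNReal) (h : r < Mf μ u t) :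
    ∃ t' > t, r < Mf μ u t' := by
  have h1 : {x | t < u x} = ⋃ n : ℕ, {x | t + 1 / ((n:ℝ) + 1) < u x} := by
    ext x
    simp only [Set.mem_ofPred_eq, Set.mem_iUnion]
    constructor
    · intro hx
      obtain ⟨n, hn⟩ := exists_nat_one_div_lt (sub_pos.2 hx)
      exact ⟨n, by linarith⟩
    · rintro ⟨n, hn⟩
      have : (0:ℝ) < 1 / ((n:ℝ) + 1) := by positivity
      linarith
  have h2 : Monotone fun n : ℕ => {x | t + 1 / ((n:ℝ) + 1) < u x} := by
    intro a b hab x hx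
    simp only [Set.mem_ofPred_eq] at hx ⊢
    have : 1 / ((b:ℝ) + 1) ≤ 1 / ((a:ℝ) + 1) := by gcongr
    linarith
  unfold Mf at h
  rw [h1, h2.measure_iUnion] at h
  obtain ⟨n, hn⟩ := lt_iSup_iff.1 h
  have : (0:ℝ) < 1 / ((n:ℝ) + 1) := by positivity
  exact ⟨t + 1 / ((n:ℝ) + 1), by linarith, hn⟩

lemma Uf_bdd (μ : Measure α) (u : α → ℝ) (C : ℝ) (hC : ∀ x, u x ≤ C) (m : ℝ) :
    BddAbove {t : ℝ | 0 ≤ t ∧ ENNReal.ofReal m < Mf μ u t} := by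
  refine ⟨C, ?_⟩
  rintro t ⟨_, h2⟩
  by_contra hlt
  push Not at hlt
  have : {x | t < u x} = ∅ := by
    ext x; simp only [Set.mem_ofPred_eq, Set.mem_empty_iff_false, iff_false, not_lt]
    exact (hC x).trans hlt.le
  simp [Mf, this] at h2

lemma Uf_nonneg (μ : Measure α) (u : α → ℝ) (m : ℝ) : 0 ≤ Uf μ u m :=
  Real.sSup_nonneg fun _ hx => hx.1

lemma lt_Uf_iff (μ : Measure α) (u : α → ℝ) (C : ℝ) (hC : ∀ x, u x ≤ C) (m t : ℝ) (ht : 0 ≤ t) :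
    t < Uf μ u m ↔ ENNReal.ofReal m < Mf μ u t := by
  constructor
  · intro h
    have hne : {t : ℝ | 0 ≤ t ∧ ENNReal.ofReal m < Mf μ u t}.Nonempty := by
      by_contra hn
      rw [Set.not_nonempty_iff_eq_empty] at hn
      unfold Uf at h
      rw [hn, Real.sSup_empty] at h
      linarith
    obtain ⟨t', ht', h'⟩ := exists_lt_of_lt_csSup hne h
    exact ht'.2.trans_le (Mf_anti μ u h'.le)
  · intro h
    obtain ⟨t', ht', h'⟩ := Mf_rc μ u t _ h
    exact lt_of_lt_of_le ht' (le_csSup (Uf_bdd μ u C hC m) ⟨by linarith, h'⟩)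

lemma Uf_anti (μ : Measure α) (u : α → ℝ) (C : ℝ) (hC : ∀ x, u x ≤ C) : Antitone (Uf μ u) := by
  intro a b hab
  by_contra hlt
  push Not at hlt
  have h0 := Uf_nonneg μ u a
  rw [lt_Uf_iff μ u C hC _ _ h0] at hlt
  have : Uf μ u a < Uf μ u a := by
    rw [lt_Uf_iff μ u C hC _ _ h0]
    exact lt_of_le_of_lt (ENNReal.ofReal_le_ofReal hab) hlt
  exact lt_irrefl _ this

lemma Uf_rc (μ : Measure α) (u : α → ℝ) (C : ℝ) (hC : ∀ x, u x ≤ C) (m : ℝ) :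
    ContinuousWithinAt (Uf μ u) (Set.Ici m) m := by
  have hanti := Uf_anti μ u C hC
  unfold ContinuousWithinAt
  rw [tendsto_order]
  constructor
  · intro t ht
    have key : ∃ m' > m, t < Uf μ u m' := by
      rcases lt_or_ge t 0 with h0 | h0
      · exact ⟨m + 1, by linarith, h0.trans_le (Uf_nonneg _ _ _)⟩
      · rw [lt_Uf_iff μ u C hC _ _ h0] at ht
        obtain ⟨r, hr1, hr2⟩ := ENNReal.lt_iff_exists_nnreal_btwn.1 ht
        refine ⟨r, ?_, ?_⟩
        · by_contra hle
          push Not at hle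
          have := ENNReal.ofReal_le_ofReal hle
          rw [ENNReal.ofReal_coe_nnreal] at this
          exact absurd hr1 (not_lt.2 this)
        · rw [lt_Uf_iff μ u C hC _ _ h0, ENNReal.ofReal_coe_nnreal]; exact hr2
    obtain ⟨m', hm', h⟩ := key
    filter_upwards [mem_nhdsWithin_of_mem_nhds (Iio_mem_nhds hm')] with x hx
    exact h.trans_le (hanti (le_of_lt hx))
  · intro t ht
    filter_upwards [self_mem_nhdsWithin] with x hx
    exact (hanti hx).trans_lt ht

lemma vol_lt (M : ENNReal) : volume {m : ℝ | 0 < m ∧ ENNReal.ofReal m < M} = M := by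
  rcases eq_or_ne M ⊤ with rfl | hM
  · simp only [ENNReal.ofReal_lt_top, and_true]
    exact Real.volume_Ioi
  · have : {m : ℝ | 0 < m ∧ ENNReal.ofReal m < M} = Set.Ioo 0 M.toReal := by
      ext m
      simp only [Set.mem_ofPred_eq, Set.mem_Ioo, and_congr_right_iff]
      intro hm
      exact ENNReal.ofReal_lt_iff_lt_toReal hm.le hM
    rw [this, Real.volume_Ioo, sub_zero, ENNReal.ofReal_toReal hM]

lemma map_eq_aux (μ : Measure α) (u : α → ℝ) (hu : Measurable u) (C : ℝ) (hC : ∀ x, u x ≤ C)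
    (hfin : ∀ t > 0, Mf μ u t ≠ ⊤) (ε : ℝ) (hε : 0 < ε) :
    (μ.map u).restrict (Set.Ioi ε) =
      ((volume.restrict (Set.Ioi (0:ℝ))).map (Uf μ u)).restrict (Set.Ioi ε) := by
  have hU := (Uf_anti μ u C hC).measurable
  have key : ∀ t ≥ ε, (μ.map u) (Set.Ioi t) =
      ((volume.restrict (Set.Ioi (0:ℝ))).map (Uf μ u)) (Set.Ioi t) := by
    intro t ht
    rw [Measure.map_apply hu measurableSet_Ioi, Measure.map_apply hU measurableSet_Ioi,
      Measure.restrict_apply (hU measurableSet_Ioi)]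
    have : Uf μ u ⁻¹' Set.Ioi t ∩ Set.Ioi 0 = {m : ℝ | 0 < m ∧ ENNReal.ofReal m < Mf μ u t} := by
      ext m
      simp only [Set.mem_inter_iff, Set.mem_preimage, Set.mem_Ioi, Set.mem_ofPred_eq]
      rw [lt_Uf_iff μ u C hC _ _ (hε.le.trans ht)]
      exact and_comm
    rw [this, vol_lt]
    rfl
  have hf : IsFiniteMeasure ((μ.map u).restrict (Set.Ioi ε)) := by
    constructor
    rw [Measure.restrict_apply_univ, Measure.map_apply hu measurableSet_Ioi]
    exact (hfin ε hε).lt_top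
  refine ext_of_generate_finite _ (BorelSpace.measurable_eq.trans (borel_eq_generateFrom_Ioi ℝ))
    isPiSystem_Ioi ?_ ?_
  · rintro _ ⟨a, rfl⟩
    rw [Measure.restrict_apply measurableSet_Ioi, Measure.restrict_apply measurableSet_Ioi,
      Set.Ioi_inter_Ioi]
    exact key _ (le_max_right _ _)
  · rw [Measure.restrict_apply_univ, Measure.restrict_apply_univ]
    exact key _ le_rfl

lemma equimeas (μ : Measure α) (u : α → ℝ) (hu : Measurable u) (C : ℝ) (hC : ∀ x, u x ≤ C)
    (hfin : ∀ t > 0, Mf μ u t ≠ ⊤) (φ : ℝ → ENNReal) (hφ : Measurable φ)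
    (hφ0 : ∀ t ≤ 0, φ t = 0) :
    ∫⁻ x, φ (u x) ∂μ = ∫⁻ m in Set.Ioi (0:ℝ), φ (Uf μ u m) := by
  have hU := (Uf_anti μ u C hC).measurable
  have hgen : ∀ ν : Measure ℝ, ∫⁻ t, φ t ∂ν = ⨆ n : ℕ, ∫⁻ t in Set.Ioi (1 / ((n:ℝ) + 1)), φ t ∂ν := by
    intro ν
    rw [← setLIntegral_iUnion_of_directed]
    · have h1 : (⋃ n : ℕ, Set.Ioi (1 / ((n:ℝ) + 1))) = Set.Ioi (0:ℝ) := by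
        ext x
        simp only [Set.mem_iUnion, Set.mem_Ioi]
        constructor
        · rintro ⟨n, hn⟩
          exact lt_trans (by positivity) hn
        · intro hx
          exact exists_nat_one_div_lt hx
      rw [h1, ← lintegral_indicator measurableSet_Ioi]
      congr 1
      ext t
      by_cases ht : t ∈ Set.Ioi (0:ℝ)
      · rw [Set.indicator_of_mem ht]
      · rw [Set.indicator_of_notMem ht]
        exact hφ0 t (not_lt.1 ht)
    · apply directed_of_isDirected_le
      intro a b hab
      apply Set.Ioi_subset_Ioi
      gcongr
  rw [← lintegral_map hφ hu, ← lintegral_map hφ hU, hgen, hgen (Measure.map (Uf μ u) _)]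
  congr 1
  ext n
  rw [map_eq_aux μ u hu C hC hfin _ (by positivity)]

lemma lint_two_mul (b : ℝ) (hb : 0 ≤ b) :
    ∫⁻ t in Set.Ioo 0 b, ENNReal.ofReal (2 * t) = ENNReal.ofReal (b ^ 2) := by
  have hi : IntegrableOn (fun t : ℝ => 2 * t) (Set.Ioc 0 b) :=
    (intervalIntegrable_iff_integrableOn_Ioc_of_le hb).1 (Continuous.intervalIntegrable (by fun_prop) _ _)
  have h1 := ofReal_integral_eq_lintegral_ofReal (hi.mono_set Set.Ioo_subset_Ioc_self)
    ((ae_restrict_mem measurableSet_Ioo).mono fun x hx => by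
      have : (0:ℝ) < x := hx.1
      show (0:ℝ) ≤ 2 * x
      positivity)
  rw [← h1, ← integral_Ioc_eq_integral_Ioo, ← intervalIntegral.integral_of_le hb]
  rw [intervalIntegral.integral_const_mul, integral_id]
  congr 1
  ring

/-- The one-dimensional core: Part I hypothesis `hI` implies the functional inequality. -/
lemma core_abs (μ : Measure α) (u : α → ℝ) (hu : Measurable u) (C : ℝ) (hC : ∀ x, u x ≤ C)
    (h0 : ∀ x, 0 ≤ u x)
    (hfin : ∀ t > 0, Mf μ u t ≠ ⊤) (s : ℝ) (hs : 2 < s)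
    (hmass : ∫⁻ x, ENNReal.ofReal (u x ^ (2 + 2 / s)) ∂μ = ENNReal.ofReal (1 / s))
    (E : ENNReal)
    (hI : ∀ β : ℝ → ℝ, Measurable β → (∀ t, 0 ≤ β t) →
      8 * (∫⁻ t in Set.Ioi (0:ℝ), ENNReal.ofReal (β t *
        Real.sqrt ((Mf μ u t).toReal * (1 + (Mf μ u t).toReal)))) ≤
        E + 4 * ∫⁻ x, ENNReal.ofReal (β (u x) ^ 2) ∂μ) :
    ENNReal.ofReal (2 * s) * (∫⁻ x, ENNReal.ofReal (u x ^ 2) ∂μ) + ENNReal.ofReal s ≤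
      E + ENNReal.ofReal (s ^ 2) * (∫⁻ x, ENNReal.ofReal (u x ^ 2) ∂μ) := by
  set U := Uf μ u with hUdef
  have hs0 : 0 < s := by linarith
  have hp0 : 0 < 2 + 2 / s := by positivity
  have good : GoodU s U := by
    refine ⟨hs.le, Uf_nonneg μ u, Uf_anti μ u C hC, Uf_rc μ u C hC, ?_⟩
    have := equimeas μ u hu C hC hfin (fun t => ENNReal.ofReal ((max t 0) ^ (2 + 2 / s))) (by fun_prop)
      (fun t ht => by simp [max_eq_right ht, Real.zero_rpow hp0.ne'])
    simp only [max_eq_left (h0 _), max_eq_left (Uf_nonneg μ u _)] at this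
    rw [← hmass, this]
  have hP : ∫⁻ x, ENNReal.ofReal (u x ^ 2) ∂μ = ∫⁻ m in Set.Ioi (0:ℝ), ENNReal.ofReal (U m ^ 2) := by
    have := equimeas μ u hu C hC hfin (fun t => ENNReal.ofReal ((max t 0) ^ 2)) (by fun_prop)
      (fun t ht => by simp [max_eq_right ht])
    simp only [max_eq_left (h0 _), max_eq_left (Uf_nonneg μ u _)] at this
    exact this
  have hmI := good.massI_cont.measurable
  have hmU := good.meas
  have hmM := Mf_meas μ u
  have hmn := good.nfun_meas
  let β : ℝ → ℝ := fun t => s / 2 * (max t 0) * Real.sqrt (1 - massI s U (Mf μ u t).toReal ^ (1 / s))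
  have hβm : Measurable β := by fun_prop
  have hβ0 : ∀ t, 0 ≤ β t := fun t => by positivity
  have h1 := hI β hβm hβ0
  set P := ∫⁻ m in Set.Ioi (0:ℝ), ENNReal.ofReal (U m ^ 2)
  set X := ∫⁻ m in Set.Ioi (0:ℝ), ENNReal.ofReal (nfun s U m * U m ^ 2) with hX
  set Z := ∫⁻ m in Set.Ioi (0:ℝ), ENNReal.ofReal (massI s U m ^ (1 / s) * U m ^ 2) with hZ
  set Y := ∫⁻ m in Set.Ioi (0:ℝ), ENNReal.ofReal ((1 - massI s U m ^ (1 / s)) * U m ^ 2) with hY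
  have hYZ : Y + Z = P := by
    rw [hY, hZ, ← lintegral_add_left (by fun_prop)]
    apply setLIntegral_congr_fun measurableSet_Ioi
    intro m hm
    have hm' : 0 < m := hm
    have a1 := good.massI_nonneg m hm'.le
    have a2 := good.massI_le_one m hm'.le
    have a3 : massI s U m ^ (1 / s) ≤ 1 := Real.rpow_le_one a1 a2 (by positivity)
    have a4 : 0 ≤ 1 - massI s U m ^ (1 / s) := by linarith
    show ENNReal.ofReal _ + ENNReal.ofReal _ = ENNReal.ofReal _
    rw [← ENNReal.ofReal_add (by positivity) (by positivity)]
    congr 1; ring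
  have hB : 4 * (∫⁻ x, ENNReal.ofReal (β (u x) ^ 2) ∂μ) ≤ ENNReal.ofReal (s ^ 2) * Y := by
    rw [equimeas μ u hu C hC hfin (fun t => ENNReal.ofReal (β t ^ 2)) (by fun_prop)
      (fun t ht => by simp [β, max_eq_right ht]), ← lintegral_const_mul _ (by rw [← hUdef]; fun_prop), hY,
      ← lintegral_const_mul _ (by fun_prop)]
    apply setLIntegral_mono' measurableSet_Ioi
    intro m hm
    have hm' : 0 < m := hm
    have a0 : Mf μ u (Uf μ u m) ≤ ENNReal.ofReal m := by
      rw [← not_lt, ← lt_Uf_iff μ u C hC _ _ (Uf_nonneg μ u m)]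
      exact lt_irrefl _
    have a1 : (Mf μ u (Uf μ u m)).toReal ≤ m := ENNReal.toReal_le_of_le_ofReal hm'.le a0
    have a2 := good.massI_anti _ _ a1
    have a3 := good.massI_nonneg m hm'.le
    have a5 := good.massI_le_one _ (ENNReal.toReal_nonneg (a := Mf μ u (Uf μ u m)))
    have a4 : massI s U m ^ (1 / s) ≤ massI s U (Mf μ u (Uf μ u m)).toReal ^ (1 / s) :=
      Real.rpow_le_rpow a3 a2 (by positivity)
    have a6 : massI s U (Mf μ u (Uf μ u m)).toReal ^ (1 / s) ≤ 1 :=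
      Real.rpow_le_one (a3.trans a2) a5 (by positivity)
    rw [show (4 : ENNReal) = ENNReal.ofReal 4 by simp, ← ENNReal.ofReal_mul (by norm_num),
      ← ENNReal.ofReal_mul (by positivity)]
    apply ENNReal.ofReal_le_ofReal
    simp only [β]
    rw [mul_pow, Real.sq_sqrt (by linarith), max_eq_left (Uf_nonneg μ u m), ← hUdef]
    have : 0 ≤ s ^ 2 * U m ^ 2 := by positivity
    nlinarith
  have hX2 : ENNReal.ofReal (2 * s) * X ≤ 8 * (∫⁻ t in Set.Ioi (0:ℝ), ENNReal.ofReal (β t *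
        Real.sqrt ((Mf μ u t).toReal * (1 + (Mf μ u t).toReal)))) := by
    have hXle : X ≤ ∫⁻ t in Set.Ioi (0:ℝ), ENNReal.ofReal (2 * t * Nfun s U (Mf μ u t).toReal) := by
      have b1 : X = ∫⁻ m in Set.Ioi (0:ℝ), ∫⁻ t in Set.Ioi (0:ℝ),
          ENNReal.ofReal (nfun s U m) * (if t < U m then ENNReal.ofReal (2 * t) else 0) := by
        rw [hX]
        apply setLIntegral_congr_fun measurableSet_Ioi
        intro m hm
        have c1 : ∫⁻ t in Set.Ioi (0:ℝ), (if t < U m then ENNReal.ofReal (2 * t) else 0)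
            = ENNReal.ofReal (U m ^ 2) := by
          rw [← lint_two_mul _ (good.nonneg m), ← lintegral_indicator measurableSet_Ioo,
            ← lintegral_indicator measurableSet_Ioi]
          congr 1
          ext t
          by_cases ht : 0 < t <;> by_cases ht2 : t < U m <;> simp [Set.indicator, ht, ht2]
        show ENNReal.ofReal _ = ∫⁻ t in Set.Ioi (0:ℝ), _
        rw [lintegral_const_mul', c1, ENNReal.ofReal_mul (good.nfun_nonneg m hm)]
        exact ENNReal.ofReal_ne_top
      rw [b1, lintegral_lintegral_swap]
      · apply setLIntegral_mono' measurableSet_Ioi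
        intro t ht
        have ht' : 0 < t := ht
        have c2 : ∫⁻ m in Set.Ioi (0:ℝ), ENNReal.ofReal (nfun s U m) * (if t < U m then ENNReal.ofReal (2 * t) else 0)
            = ENNReal.ofReal (2 * t) * ∫⁻ m in Set.Ioo (0:ℝ) (Mf μ u t).toReal, ENNReal.ofReal (nfun s U m) := by
          rw [← lintegral_const_mul _ (by fun_prop), ← lintegral_indicator measurableSet_Ioo,
            ← lintegral_indicator measurableSet_Ioi]
          congr 1
          ext m
          by_cases hm : 0 < m
          · have c3 : t < U m ↔ m < (Mf μ u t).toReal := by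
              rw [hUdef, lt_Uf_iff μ u C hC _ _ ht'.le]
              exact ENNReal.ofReal_lt_iff_lt_toReal hm.le (hfin t ht')
            by_cases hm2 : m < (Mf μ u t).toReal <;> simp [Set.indicator, hm, hm2, c3, mul_comm]
          · simp [Set.indicator, hm]
        rw [c2, ENNReal.ofReal_mul (p := 2 * t) (by positivity)]
        refine mul_le_mul_right ?_ _
        apply good.nfun_int _ ENNReal.toReal_nonneg
        intro m hm0 hm
        refine ht'.trans ?_
        rw [hUdef, lt_Uf_iff μ u C hC _ _ ht'.le]
        exact (ENNReal.ofReal_lt_iff_lt_toReal hm0.le (hfin t ht')).2 hm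
      · apply Measurable.aemeasurable
        apply Measurable.mul
        · fun_prop
        · refine Measurable.ite ?_ (by fun_prop) (by fun_prop)
          exact measurableSet_lt measurable_snd (hmU.comp measurable_fst)
    calc ENNReal.ofReal (2 * s) * X ≤ ENNReal.ofReal (2 * s) * ∫⁻ t in Set.Ioi (0:ℝ), ENNReal.ofReal (2 * t * Nfun s U (Mf μ u t).toReal) := by gcongr
      _ = _ := by
        have hmN := good.Nfun_cont.measurable
        rw [← lintegral_const_mul _ (by fun_prop), ← lintegral_const_mul _ (by fun_prop)]
        apply setLIntegral_congr_fun measurableSet_Ioi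
        intro t ht
        have ht' : 0 < t := ht
        simp only
        rw [show (8 : ENNReal) = ENNReal.ofReal 8 by simp,
          ← ENNReal.ofReal_mul (by positivity), ← ENNReal.ofReal_mul (by norm_num)]
        congr 1
        simp only [β, Nfun, max_eq_left ht'.le]
        ring
  have hineq := good.int_ineq
  rw [hP]
  have e1 : ENNReal.ofReal (2 * s) * X + ENNReal.ofReal (s ^ 2) * Z ≤ E + ENNReal.ofReal (s ^ 2) * P := by
    calc ENNReal.ofReal (2 * s) * X + ENNReal.ofReal (s ^ 2) * Z
        ≤ (E + ENNReal.ofReal (s ^ 2) * Y) + ENNReal.ofReal (s ^ 2) * Z := by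
          refine add_le_add_left ?_ _
          exact hX2.trans (h1.trans (add_le_add_right hB _))
      _ = _ := by rw [← hYZ, mul_add, add_assoc]
  refine le_trans ?_ e1
  calc ENNReal.ofReal (2 * s) * P + ENNReal.ofReal s = ENNReal.ofReal s * (2 * P + 1) := by
        rw [ENNReal.ofReal_mul (by norm_num), ENNReal.ofReal_ofNat]; ring
    _ ≤ ENNReal.ofReal s * (2 * X + ENNReal.ofReal s * Z) := mul_le_mul_right hineq _
    _ = _ := by
        rw [ENNReal.ofReal_mul (by norm_num), ENNReal.ofReal_ofNat, ENNReal.ofReal_pow hs0.le]; ring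

end rearr

lemma radial_int (r : ℝ) (hr0 : 0 ≤ r) (hr1 : r < 1) :
    ∫⁻ x in Set.Ioo 0 r, ENNReal.ofReal (2 * x / (1 - x ^ 2) ^ 2) = ENNReal.ofReal (1 / (1 - r ^ 2) - 1) := by
  have hd : ∀ x ∈ Set.uIcc 0 r, HasDerivAt (fun x : ℝ => 1 / (1 - x ^ 2)) (2 * x / (1 - x ^ 2) ^ 2) x := by
    intro x hx
    rw [Set.uIcc_of_le hr0] at hx
    have h1 : 1 - x ^ 2 ≠ 0 := by nlinarith [hx.1, hx.2]
    have := (((hasDerivAt_id x).pow 2).const_sub 1).fun_inv h1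
    simp only [one_div]
    refine this.congr_deriv ?_
    simp
  have hc : ContinuousOn (fun x : ℝ => 2 * x / (1 - x ^ 2) ^ 2) (Set.uIcc 0 r) := by
    apply ContinuousOn.div (by fun_prop) (by fun_prop)
    intro x hx
    rw [Set.uIcc_of_le hr0] at hx
    have h1 : 0 < 1 - x ^ 2 := by nlinarith [hx.1, hx.2]
    positivity
  have hi := hc.intervalIntegrable (μ := volume)
  have he := intervalIntegral.integral_eq_sub_of_hasDerivAt hd hi
  rw [intervalIntegral.integral_of_le hr0, integral_Ioc_eq_integral_Ioo] at he
  rw [← ofReal_integral_eq_lintegral_ofReal (((intervalIntegrable_iff_integrableOn_Ioc_of_le hr0).1 hi).mono_set Set.Ioo_subset_Ioc_self), he]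
  · simp
  · refine (ae_restrict_mem measurableSet_Ioo).mono fun x hx => ?_
    have : (0:ℝ) < x := hx.1
    show (0:ℝ) ≤ 2 * x / (1 - x ^ 2) ^ 2
    positivity

lemma ray_lemma (v v' : ℝ → ℝ) (hc : ContinuousOn v (Set.Icc 0 1)) (h1 : v 1 = 0)
    (hd : ∀ r ∈ Set.Ioo (0:ℝ) 1, HasDerivAt v (v' r) r) (a : ℝ → ENNReal) :
    ∫⁻ t in Set.Ioo 0 (v 0), a t * (1 + ∫⁻ r in Set.Ioo (0:ℝ) 1,
        if t < v r then ENNReal.ofReal (2 * r / (1 - r ^ 2) ^ 2) else 0) ≤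
      ∫⁻ r in Set.Ioo (0:ℝ) 1, ENNReal.ofReal (- v' r) * (if v r < v 0 then a (v r) else 0)
        * ENNReal.ofReal (1 / (1 - r ^ 2)) := by
  set R : ℝ → ℝ := fun t => sSup {r | r ∈ Set.Icc (0:ℝ) 1 ∧ t ≤ v r} with hR
  have hbdd : ∀ t, BddAbove {r | r ∈ Set.Icc (0:ℝ) 1 ∧ t ≤ v r} := fun t => ⟨1, fun r hr => hr.1.2⟩
  have hRanti : Antitone R := by
    intro a b hab
    simp only [hR]
    rcases Set.eq_empty_or_nonempty {r | r ∈ Set.Icc (0:ℝ) 1 ∧ b ≤ v r} with he | hne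
    · rw [he, Real.sSup_empty]
      exact Real.sSup_nonneg fun r hr => hr.1.1
    · exact csSup_le_csSup (hbdd a) hne fun r hr => ⟨hr.1, hab.trans hr.2⟩
  have hRprop : ∀ t ∈ Set.Ioo 0 (v 0), R t ∈ Set.Ioo (0:ℝ) 1 ∧ v (R t) = t ∧
      ∀ r, R t < r → r ≤ 1 → v r < t := by
    intro t ht
    have hcl : IsClosed {r | r ∈ Set.Icc (0:ℝ) 1 ∧ t ≤ v r} := by
      have := hc.preimage_isClosed_of_isClosed isClosed_Icc (isClosed_Ici (a := t))
      exact this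
    have hne : {r | r ∈ Set.Icc (0:ℝ) 1 ∧ t ≤ v r}.Nonempty := ⟨0, by simp, ht.2.le⟩
    have hmem := hcl.csSup_mem hne (hbdd t)
    have hafter : ∀ r, R t < r → r ≤ 1 → v r < t := by
      intro r hr hr1
      by_contra hle
      push Not at hle
      have : r ≤ R t := le_csSup (hbdd t) ⟨⟨hmem.1.1.trans hr.le, hr1⟩, hle⟩
      linarith
    have heq : v (R t) = t := by
      refine le_antisymm ?_ hmem.2
      by_contra hlt
      push Not at hlt
      have hc' : ContinuousOn v (Set.Icc (R t) 1) := hc.mono (Set.Icc_subset_Icc_left hmem.1.1)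
      have := intermediate_value_Icc' hmem.1.2 hc'
      obtain ⟨r, hr, hrt⟩ := this (⟨by rw [h1]; exact ht.1.le, hlt.le⟩ : t ∈ Set.Icc (v 1) (v (R t)))
      rcases hr.1.eq_or_lt with h | h
      · rw [← h] at hrt; linarith
      · have := hafter r h hr.2
        linarith
    refine ⟨⟨?_, ?_⟩, heq, hafter⟩
    · refine lt_of_le_of_ne hmem.1.1 fun h => ?_
      have h' : R t = 0 := h.symm
      rw [h'] at heq
      linarith [ht.2]
    · refine lt_of_le_of_ne hmem.1.2 fun h => ?_
      have h' : R t = 1 := h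
      rw [h', h1] at heq
      linarith [ht.1]
  set S := R '' Set.Ioo 0 (v 0) with hS
  have hRinj : Set.InjOn R (Set.Ioo 0 (v 0)) := by
    intro x hx y hy hxy
    rw [← (hRprop x hx).2.1, ← (hRprop y hy).2.1, hxy]
  have hSm : MeasurableSet S := measurableSet_Ioo.image_of_measurable_injOn hRanti.measurable hRinj
  have hvS : v '' S = Set.Ioo 0 (v 0) := by
    ext t
    constructor
    · rintro ⟨_, ⟨t', ht', rfl⟩, rfl⟩
      rw [(hRprop t' ht').2.1]; exact ht'
    · intro ht
      exact ⟨R t, ⟨t, ht, rfl⟩, (hRprop t ht).2.1⟩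
  have hvinj : Set.InjOn v S := by
    rintro _ ⟨x, hx, rfl⟩ _ ⟨y, hy, rfl⟩ hxy
    rw [(hRprop x hx).2.1, (hRprop y hy).2.1] at hxy
    rw [hxy]
  have hSsub : S ⊆ Set.Ioo 0 1 := by
    rintro _ ⟨x, hx, rfl⟩
    exact (hRprop x hx).1
  rw [← hvS, lintegral_image_eq_lintegral_abs_deriv_mul hSm
    (fun r hr => (hd r (hSsub hr)).hasDerivWithinAt) hvinj]
  refine le_trans ?_ (lintegral_mono_set hSsub)
  apply setLIntegral_mono' hSm
  rintro _ ⟨t, ht, rfl⟩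
  obtain ⟨hR01, hvR, haft⟩ := hRprop t ht
  have hder : v' (R t) ≤ 0 := by
    have hs := (hasDerivAt_iff_tendsto_slope.1 (hd _ hR01)).mono_left
      (nhdsWithin_mono (R t) (fun x (hx : R t < x) => (ne_of_gt hx : x ≠ R t)) :
        nhdsWithin (R t) (Set.Ioi (R t)) ≤ _)
    refine le_of_tendsto hs ?_
    filter_upwards [Ioo_mem_nhdsGT hR01.2] with x hx
    rw [slope_def_field]
    have := haft x hx.1 hx.2.le
    rw [hvR]
    exact div_nonpos_of_nonpos_of_nonneg (by linarith) (by linarith [hx.1])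
  rw [abs_of_nonpos hder, hvR, if_pos ht.2, mul_assoc]
  gcongr
  have hle : ∫⁻ r in Set.Ioo (0:ℝ) 1, (if t < v r then ENNReal.ofReal (2 * r / (1 - r ^ 2) ^ 2) else 0)
      ≤ ENNReal.ofReal (1 / (1 - (R t) ^ 2) - 1) := by
    rw [← radial_int _ hR01.1.le hR01.2, ← lintegral_indicator measurableSet_Ioo,
      ← lintegral_indicator measurableSet_Ioo]
    apply lintegral_mono
    intro r
    simp only [Set.indicator]
    split_ifs with g1 g2 g3 <;> try simp
    exfalso
    apply g3
    refine ⟨g1.1, ?_⟩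
    rcases lt_trichotomy r (R t) with h | h | h
    · exact h
    · rw [h, hvR] at g2; linarith
    · have := haft r h g1.2.le; linarith
  have h3 : 1 ≤ 1 / (1 - (R t) ^ 2) := by
    rw [le_div_iff₀ (by nlinarith [hR01.1, hR01.2])]
    nlinarith [hR01.1]
  calc 1 + _ ≤ 1 + ENNReal.ofReal (1 / (1 - (R t) ^ 2) - 1) := by gcongr
    _ = ENNReal.ofReal (1 / (1 - (R t) ^ 2)) := by
      rw [← ENNReal.ofReal_one, ← ENNReal.ofReal_add (by norm_num) (by linarith)]
      congr 1; ring

lemma polar_ball (δ : ℝ) (F : ℂ → ENNReal) (hF : Measurable F) :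
    ∫⁻ w in ball (0:ℂ) δ, F w = ∫⁻ θ in Set.Ioo (-Real.pi) Real.pi, ∫⁻ r in Set.Ioo (0:ℝ) δ,
      ENNReal.ofReal r * F (circleMap 0 r θ) := by
  have hcm : Measurable fun p : ℝ × ℝ => circleMap 0 p.1 p.2 := by
    unfold circleMap; fun_prop
  rw [← lintegral_indicator measurableSet_ball, ← Complex.lintegral_comp_polarCoord_symm,
    polarCoord_target, Measure.volume_eq_prod, ← Measure.prod_restrict,
    lintegral_prod_symm']
  · apply lintegral_congr
    intro θ
    rw [← lintegral_indicator measurableSet_Ioi, ← lintegral_indicator measurableSet_Ioo]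
    apply lintegral_congr
    intro r
    have hr : Complex.polarCoord.symm (r, θ) = circleMap 0 r θ := by
      rw [Complex.polarCoord_symm_apply, circleMap, Complex.exp_mul_I, zero_add]
      push_cast
      rfl
    simp only [Set.indicator_apply (Set.Ioi (0:ℝ)), hr]
    by_cases h0 : 0 < r
    · have : circleMap 0 r θ ∈ ball (0:ℂ) δ ↔ r < δ := by
        rw [mem_ball_zero_iff, norm_circleMap_zero, abs_of_pos h0]
      by_cases h1 : r < δ <;> simp [Set.indicator, h0, h1, this]
    · simp [Set.indicator, h0]
  · have : Measurable fun p : ℝ × ℝ => Complex.polarCoord.symm p := by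
      have : (fun p : ℝ × ℝ => Complex.polarCoord.symm p) = fun p : ℝ × ℝ => circleMap 0 p.1 p.2 := by
        ext1 p
        rw [Complex.polarCoord_symm_apply, circleMap, Complex.exp_mul_I, zero_add]
        push_cast
        rfl
      rw [this]; exact hcm
    simp only [smul_eq_mul]
    apply Measurable.mul (by fun_prop)
    exact (hF.indicator measurableSet_ball).comp this

/-- Möbius involution -/
noncomputable def tau (z w : ℂ) : ℂ := (z - w) / (1 - (starRingEnd ℂ) z * w)

lemma tau_den_ne {z w : ℂ} (hz : ‖z‖ < 1) (hw : ‖w‖ ≤ 1) : 1 - (starRingEnd ℂ) z * w ≠ 0 := by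
  intro h
  have h1 : (starRingEnd ℂ) z * w = 1 := (sub_eq_zero.1 h).symm
  have h2 : ‖z‖ * ‖w‖ = 1 := by
    have := congrArg norm h1
    rwa [norm_mul, RCLike.norm_conj, norm_one] at this
  nlinarith [norm_nonneg z, norm_nonneg w]

lemma sq_norm (x : ℂ) : (‖x‖:ℂ) ^ 2 = x * (starRingEnd ℂ) x := (Complex.mul_conj' x).symm

lemma tau_norm {z w : ℂ} (hz : ‖z‖ < 1) (hw : ‖w‖ ≤ 1) :
    1 - ‖tau z w‖ ^ 2 = (1 - ‖z‖ ^ 2) * (1 - ‖w‖ ^ 2) / ‖1 - (starRingEnd ℂ) z * w‖ ^ 2 := by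
  have h := tau_den_ne hz hw
  have h' : ‖1 - (starRingEnd ℂ) z * w‖ ≠ 0 := norm_ne_zero_iff.2 h
  rw [eq_div_iff (by positivity), tau, norm_div, div_pow, sub_mul, div_mul_cancel₀ _ (by positivity)]
  have : (((1 * ‖1 - (starRingEnd ℂ) z * w‖ ^ 2 - ‖z - w‖ ^ 2 : ℝ)) : ℂ) =
      (((1 - ‖z‖ ^ 2) * (1 - ‖w‖ ^ 2) : ℝ) : ℂ) := by
    push_cast
    simp only [sq_norm, map_sub, map_mul, map_one, Complex.conj_conj]
    ring
  exact_mod_cast this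

lemma tau_mem {z w : ℂ} (hz : ‖z‖ < 1) (hw : ‖w‖ < 1) : ‖tau z w‖ < 1 := by
  have h := tau_norm hz hw.le
  have h' : 0 < ‖1 - (starRingEnd ℂ) z * w‖ := norm_pos_iff.2 (tau_den_ne hz hw.le)
  have h1 : 0 < 1 - ‖z‖ ^ 2 := by nlinarith [norm_nonneg z]
  have h2 : 0 < 1 - ‖w‖ ^ 2 := by nlinarith [norm_nonneg w]
  have : 0 < 1 - ‖tau z w‖ ^ 2 := by rw [h]; positivity
  nlinarith [norm_nonneg (tau z w)]

lemma tau_bdry {z w : ℂ} (hz : ‖z‖ < 1) (hw : ‖w‖ = 1) : ‖tau z w‖ = 1 := by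
  have h := tau_norm hz hw.le
  rw [hw] at h
  have : ‖tau z w‖ ^ 2 = 1 := by simp at h; linarith
  nlinarith [norm_nonneg (tau z w)]

lemma one_sub_conj_tau {z w : ℂ} (hz : ‖z‖ < 1) (hw : ‖w‖ ≤ 1) :
    1 - (starRingEnd ℂ) z * tau z w = (1 - (‖z‖:ℂ) ^ 2) / (1 - (starRingEnd ℂ) z * w) := by
  have h := tau_den_ne hz hw
  rw [sq_norm, tau]
  field_simp
  ring

lemma one_sub_normsq_ne {z : ℂ} (hz : ‖z‖ < 1) : (1 - (‖z‖:ℂ) ^ 2) ≠ 0 := by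
  have h1 : 0 < 1 - ‖z‖ ^ 2 := by nlinarith [norm_nonneg z]
  have : (((1 - ‖z‖ ^ 2 : ℝ)) : ℂ) ≠ 0 := by exact_mod_cast h1.ne'
  simpa using this

lemma tau_tau {z w : ℂ} (hz : ‖z‖ < 1) (hw : ‖w‖ ≤ 1) : tau z (tau z w) = w := by
  have h := tau_den_ne hz hw
  have h2 := one_sub_normsq_ne hz
  have h1 := one_sub_conj_tau hz hw
  have h3 : tau z (tau z w) = (z - tau z w) / ((1 - (‖z‖:ℂ) ^ 2) / (1 - (starRingEnd ℂ) z * w)) := by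
    rw [← h1]; rfl
  rw [h3, div_eq_iff (div_ne_zero h2 h), sq_norm, tau, ← mul_div_assoc, eq_div_iff h, sub_mul,
    div_mul_cancel₀ _ h]
  ring

lemma tau_deriv {z w : ℂ} (hz : ‖z‖ < 1) (hw : ‖w‖ ≤ 1) :
    HasDerivAt (tau z) (-(1 - (‖z‖:ℂ) ^ 2) / (1 - (starRingEnd ℂ) z * w) ^ 2) w := by
  have h := tau_den_ne hz hw
  have h1 : HasDerivAt (fun w => z - w) (-1) w := by simpa using (hasDerivAt_id w).const_sub z
  have h2 : HasDerivAt (fun w => 1 - (starRingEnd ℂ) z * w) (-(starRingEnd ℂ) z) w := by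
    simpa using ((hasDerivAt_id w).const_mul ((starRingEnd ℂ) z)).const_sub 1
  refine (h1.div h2 h).congr_deriv ?_
  congr 1
  rw [sq_norm]
  ring

lemma tau_meas2 : Measurable fun p : ℂ × ℂ => tau p.1 p.2 := by
  unfold tau
  have : Measurable fun p : ℂ × ℂ => (starRingEnd ℂ) p.1 := Complex.continuous_conj.measurable.comp measurable_fst
  fun_prop

lemma tau_meas (z : ℂ) : Measurable (tau z) := tau_meas2.comp (measurable_const.prodMk measurable_id)

/-- hyperbolic measure -/
noncomputable def muH : Measure ℂ :=
  (volume.restrict (ball (0 : ℂ) 1)).withDensity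
    (fun ζ => ENNReal.ofReal (1 / Real.pi * ((1 - ‖ζ‖ ^ 2) ^ 2)⁻¹))

lemma dens_meas : Measurable (fun ζ : ℂ => ENNReal.ofReal (1 / Real.pi * ((1 - ‖ζ‖ ^ 2) ^ 2)⁻¹)) := by
  fun_prop

lemma lint_muH (g : ℂ → ENNReal) :
    ∫⁻ ζ, g ζ ∂muH = ∫⁻ ζ in ball (0:ℂ) 1, ENNReal.ofReal (1 / Real.pi * ((1 - ‖ζ‖ ^ 2) ^ 2)⁻¹) * g ζ := by
  unfold muH
  rw [lintegral_withDensity_eq_lintegral_mul_non_measurable _ dens_meas]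
  · rfl
  · exact Filter.Eventually.of_forall fun _ => ENNReal.ofReal_lt_top

lemma det_mul (c : ℂ) : (((ContinuousLinearMap.toSpanSingleton ℂ c).restrictScalars ℝ : ℂ →L[ℝ] ℂ)).det = ‖c‖ ^ 2 := by
  have : (((ContinuousLinearMap.toSpanSingleton ℂ c).restrictScalars ℝ : ℂ →L[ℝ] ℂ)).det
     = LinearMap.det ((ContinuousLinearMap.toSpanSingleton ℂ c : ℂ →L[ℂ] ℂ).toLinearMap.restrictScalars ℝ) := rfl
  rw [this, ← LinearMap.det_toMatrix Complex.basisOneI, Matrix.det_fin_two]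
  simp [LinearMap.toMatrix_apply, Complex.sq_norm, Complex.normSq_apply]

lemma muH_inv {z : ℂ} (hz : ‖z‖ < 1) (g : ℂ → ENNReal) :
    ∫⁻ w, g (tau z w) ∂muH = ∫⁻ w, g w ∂muH := by
  rw [lint_muH, lint_muH]
  have himg : tau z '' ball (0:ℂ) 1 = ball (0:ℂ) 1 := by
    ext w
    simp only [Set.mem_image, mem_ball_zero_iff]
    constructor
    · rintro ⟨x, hx, rfl⟩; exact tau_mem hz hx
    · intro hw; exact ⟨tau z w, tau_mem hz hw, tau_tau hz hw.le⟩
  have hinj : Set.InjOn (tau z) (ball (0:ℂ) 1) := by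
    intro x hx y hy hxy
    rw [mem_ball_zero_iff] at hx hy
    rw [← tau_tau hz hx.le, ← tau_tau hz hy.le, hxy]
  have hcv := lintegral_image_eq_lintegral_abs_det_fderiv_mul volume (s := ball (0:ℂ) 1) measurableSet_ball
    (f := tau z) (fun x hx => ((tau_deriv hz (le_of_lt (mem_ball_zero_iff.1 hx))).hasFDerivAt.restrictScalars ℝ).hasFDerivWithinAt) hinj
    (fun ζ => ENNReal.ofReal (1 / Real.pi * ((1 - ‖ζ‖ ^ 2) ^ 2)⁻¹) * g ζ)
  rw [himg] at hcv
  rw [hcv]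
  apply setLIntegral_congr_fun measurableSet_ball
  intro w hw
  rw [mem_ball_zero_iff] at hw
  simp only
  rw [← mul_assoc, det_mul, tau_norm hz hw.le, ← ENNReal.ofReal_mul (abs_nonneg _)]
  congr 2
  have h' : 0 < ‖1 - (starRingEnd ℂ) z * w‖ := norm_pos_iff.2 (tau_den_ne hz hw.le)
  have h1 : 0 < 1 - ‖z‖ ^ 2 := by nlinarith [norm_nonneg z]
  have h2 : 0 < 1 - ‖w‖ ^ 2 := by nlinarith [norm_nonneg w]
  have h3 : ‖(1 - (‖z‖:ℂ) ^ 2)‖ = 1 - ‖z‖ ^ 2 := by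
    have : (1 - (‖z‖:ℂ) ^ 2) = ((1 - ‖z‖ ^ 2 : ℝ) : ℂ) := by push_cast; ring
    rw [this, Complex.norm_real, Real.norm_of_nonneg h1.le]
  rw [abs_of_nonneg (by positivity), norm_div, norm_neg, h3, norm_pow]
  field_simp

lemma bath_sign (e w : ℂ) (he : ‖e‖ = 1) (δ : ℝ) (h0 : 0 < δ) (h1 : δ < 1) (hw1 : ‖w‖ < 1) (hw : w ≠ 0) :
    (δ ^ 2 - ‖tau (δ * e) w‖ ^ 2) * ‖1 - (starRingEnd ℂ) (δ * e) * w‖ ^ 2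
      = (1 - δ ^ 2) * (2 * δ) * ‖w‖ ^ 2 * ((e / w).re - (1 + δ ^ 2) / (2 * δ)) := by
  have hz : ‖(δ * e : ℂ)‖ < 1 := by rw [norm_mul, he, Complex.norm_real, Real.norm_of_nonneg h0.le]; linarith
  have hd := tau_den_ne hz hw1.le
  have hd' : ‖1 - (starRingEnd ℂ) (δ * e) * w‖ ≠ 0 := norm_ne_zero_iff.2 hd
  have hw' : ‖w‖ ≠ 0 := norm_ne_zero_iff.2 hw
  rw [sub_mul, tau, norm_div, div_pow, div_mul_cancel₀ _ (by positivity)]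
  have hre : (e / w).re = (e.re * w.re + e.im * w.im) / ‖w‖ ^ 2 := by
    rw [Complex.div_re, Complex.normSq_eq_norm_sq]; ring
  have he2 : e.re ^ 2 + e.im ^ 2 = 1 := by
    have := Complex.sq_norm e
    rw [he, Complex.normSq_apply] at this
    linarith
  have r1 : (1 - δ ^ 2) * (2 * δ) * ‖w‖ ^ 2 * ((e / w).re - (1 + δ ^ 2) / (2 * δ))
      = (1 - δ ^ 2) * (2 * δ * (e.re * w.re + e.im * w.im) - (1 + δ ^ 2) * ‖w‖ ^ 2) := by
    rw [hre]; field_simp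
  rw [r1]
  simp only [Complex.sq_norm, Complex.normSq_apply, Complex.sub_re, Complex.sub_im, Complex.mul_re,
    Complex.mul_im, Complex.conj_re, Complex.conj_im, Complex.ofReal_re, Complex.ofReal_im,
    Complex.one_re, Complex.one_im]
  linear_combination (δ ^ 4 * (w.re ^ 2 + w.im ^ 2) - δ ^ 2 ) * he2

lemma theta_avg (e : ℂ) (he : ‖e‖ = 1) (δ k : ℝ) (h0 : 0 < δ) (h1 : δ < 1) (r : ℝ) (hr : 0 < r) (hrδ : r < δ)
    (hpos : ∀ θ : ℝ, 0 ≤ (e / tau (δ * e) (circleMap 0 r θ)).re - k) :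
    ∫⁻ θ in Set.Ioo (-Real.pi) Real.pi, ENNReal.ofReal ((e / tau (δ * e) (circleMap 0 r θ)).re - k)
      = ENNReal.ofReal (2 * Real.pi * (1 / δ - k)) := by
  set z : ℂ := δ * e with hz
  have hzn : ‖z‖ = δ := by rw [hz, norm_mul, he, Complex.norm_real, Real.norm_of_nonneg h0.le, mul_one]
  have hne : e ≠ 0 := by rw [← norm_pos_iff, he]; norm_num
  set g : ℂ → ℂ := fun v => e * (1 - (starRingEnd ℂ) z * v) / (z - v) with hg
  have hgt : ∀ v, e / tau z v = g v := by
    intro v; simp only [hg, tau]; rw [div_div_eq_mul_div]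
  simp only [hgt] at hpos ⊢
  have hgd : ∀ v ∈ ball (0:ℂ) δ, DifferentiableAt ℂ g v := by
    intro v hv
    rw [mem_ball_zero_iff] at hv
    apply DifferentiableAt.div (by fun_prop) (by fun_prop)
    intro h
    rw [sub_eq_zero] at h
    rw [← h, hzn] at hv
    exact lt_irrefl _ hv
  have hsub : closedBall (0:ℂ) |r| ⊆ ball 0 δ := by
    rw [abs_of_pos hr]; exact closedBall_subset_ball hrδ
  have havg : Real.circleAverage g 0 r = g 0 :=
    DiffContOnCl.circleAverage (DifferentiableOn.diffContOnCl
      (fun v hv => (hgd v (hsub (closure_ball_subset_closedBall hv))).differentiableWithinAt))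
  have hcg : Continuous fun θ : ℝ => g (circleMap 0 r θ) := by
    rw [continuous_iff_continuousAt]
    intro θ
    have : circleMap 0 r θ ∈ ball (0:ℂ) δ := by
      rw [mem_ball_zero_iff, norm_circleMap_zero, abs_of_pos hr]; exact hrδ
    exact ContinuousAt.comp (f := circleMap 0 r) (hgd _ this).continuousAt (continuous_circleMap 0 r).continuousAt
  have hg0 : g 0 = ((1 / δ : ℝ) : ℂ) := by
    simp only [hg, hz]
    have : (δ:ℂ) ≠ 0 := by exact_mod_cast h0.ne'
    push_cast
    field_simp
    simp
  have hcr : Continuous fun θ : ℝ => (g (circleMap 0 r θ)).re - k := (Complex.continuous_re.comp hcg).sub continuous_const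
  have hpi : -Real.pi ≤ Real.pi := by linarith [Real.pi_pos]
  rw [← ofReal_integral_eq_lintegral_ofReal]
  · rw [← integral_Ioc_eq_integral_Ioo, ← intervalIntegral.integral_of_le hpi]
    congr 1
    rw [Real.circleAverage_eq_integral_add (-Real.pi), hg0] at havg
    have h2 : ∫ θ in (0:ℝ)..2 * Real.pi, g (circleMap 0 r (θ + -Real.pi)) = ∫ θ in (-Real.pi)..Real.pi, g (circleMap 0 r θ) := by
      rw [intervalIntegral.integral_comp_add_right (fun θ => g (circleMap 0 r θ))]
      congr 1 <;> ring
    rw [h2] at havg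
    have h3 : (∫ θ in (-Real.pi)..Real.pi, (g (circleMap 0 r θ)).re) = 2 * Real.pi * (1 / δ) := by
      have h4 := congrArg Complex.re havg
      rw [Complex.ofReal_re, Complex.smul_re] at h4
      have h5 : (∫ θ in (-Real.pi)..Real.pi, (g (circleMap 0 r θ)).re) = (∫ θ in (-Real.pi)..Real.pi, g (circleMap 0 r θ)).re := by
        have := Complex.reCLM.intervalIntegral_comp_comm (μ := volume) (hcg.intervalIntegrable (-Real.pi) Real.pi)
        exact this
      rw [h5, ← h4]
      have := Real.pi_pos
      simp only [smul_eq_mul]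
      field_simp
    rw [intervalIntegral.integral_sub, h3]
    · simp; ring
    · exact (Complex.continuous_re.comp hcg).intervalIntegrable _ _
    · exact intervalIntegrable_const
  · exact ((intervalIntegrable_iff_integrableOn_Ioc_of_le hpi).1 (hcr.intervalIntegrable _ _)).mono_set Set.Ioo_subset_Ioc_self
  · exact Filter.Eventually.of_forall fun θ => hpos θ

lemma bath_ball (e : ℂ) (he : ‖e‖ = 1) (δ : ℝ) (h0 : 0 < δ) (h1 : δ < 1) :
    ∫⁻ w, ENNReal.ofReal ((e / w).re - (1 + δ ^ 2) / (2 * δ)) ∂muH ≤ ENNReal.ofReal (δ / 2) := by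
  set k := (1 + δ ^ 2) / (2 * δ) with hk
  set z : ℂ := δ * e with hz
  have hzn : ‖z‖ = δ := by rw [hz, norm_mul, he, Complex.norm_real, Real.norm_of_nonneg h0.le, mul_one]
  have hz1 : ‖z‖ < 1 := by rw [hzn]; exact h1
  have hk0 : 0 < k := by positivity
  have hδ2 : 0 < 1 - δ ^ 2 := by nlinarith
  have hsign : ∀ v : ℂ, ‖v‖ < 1 → δ ≤ ‖v‖ → (e / tau z v).re - k ≤ 0 := by
    intro v hv hδv
    rcases eq_or_ne (tau z v) 0 with h | h
    · rw [h, div_zero, Complex.zero_re]; linarith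
    have hs := bath_sign e (tau z v) he δ h0 h1 (tau_mem hz1 hv) h
    rw [← hz, tau_tau hz1 hv.le, ← hk] at hs
    have a1 : 0 < ‖tau z v‖ ^ 2 := by have := norm_pos_iff.2 h; positivity
    by_contra hc
    push Not at hc
    have : 0 < (1 - δ ^ 2) * (2 * δ) * ‖tau z v‖ ^ 2 * ((e / tau z v).re - k) := by positivity
    rw [← hs] at this
    have := pos_of_mul_pos_left this (by positivity)
    nlinarith
  have hsign2 : ∀ v : ℂ, ‖v‖ < δ → 0 ≤ (e / tau z v).re - k := by
    intro v hv
    have hv1 : ‖v‖ < 1 := hv.trans h1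
    have h : tau z v ≠ 0 := by
      intro h
      have := tau_tau hz1 hv1.le
      rw [h] at this
      simp [tau] at this
      rw [← this, hzn] at hv
      exact lt_irrefl _ hv
    have hs := bath_sign e (tau z v) he δ h0 h1 (tau_mem hz1 hv1) h
    rw [← hz, tau_tau hz1 hv1.le, ← hk] at hs
    have a1 : 0 < ‖tau z v‖ ^ 2 := by have := norm_pos_iff.2 h; positivity
    have a2 : 0 ≤ (δ ^ 2 - ‖v‖ ^ 2) := by nlinarith [norm_nonneg v]
    by_contra hc
    push Not at hc
    have : (1 - δ ^ 2) * (2 * δ) * ‖tau z v‖ ^ 2 * ((e / tau z v).re - k) < 0 := mul_neg_of_pos_of_neg (by positivity) hc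
    rw [← hs] at this
    have : 0 ≤ (δ ^ 2 - ‖v‖ ^ 2) * ‖1 - (starRingEnd ℂ) z * tau z v‖ ^ 2 := by positivity
    linarith
  have htm := tau_meas z
  rw [← muH_inv hz1, lint_muH]
  have hle : ∫⁻ ζ in ball (0:ℂ) 1, ENNReal.ofReal (1 / Real.pi * ((1 - ‖ζ‖ ^ 2) ^ 2)⁻¹) * ENNReal.ofReal ((e / tau z ζ).re - k)
      ≤ ∫⁻ ζ in ball (0:ℂ) δ, ENNReal.ofReal (1 / Real.pi * ((1 - ‖ζ‖ ^ 2) ^ 2)⁻¹) * ENNReal.ofReal ((e / tau z ζ).re - k) := by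
    rw [← lintegral_indicator measurableSet_ball, ← lintegral_indicator measurableSet_ball]
    apply lintegral_mono
    intro v
    simp only [Set.indicator, mem_ball_zero_iff]
    split_ifs with g1 g2
    · exact le_rfl
    · rw [ENNReal.ofReal_of_nonpos (hsign v g1 (not_lt.1 g2)), mul_zero]
    · exact zero_le
    · exact le_rfl
  refine hle.trans ?_
  have hcm : Measurable fun p : ℝ × ℝ => circleMap 0 p.2 p.1 := by
    unfold circleMap; fun_prop
  have hre := Complex.measurable_re
  rw [polar_ball _ _ (by fun_prop), lintegral_lintegral_swap]
  · have hin : ∀ r ∈ Set.Ioo 0 δ, ∫⁻ θ in Set.Ioo (-Real.pi) Real.pi, ENNReal.ofReal r *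
        (ENNReal.ofReal (1 / Real.pi * ((1 - ‖circleMap 0 r θ‖ ^ 2) ^ 2)⁻¹) * ENNReal.ofReal ((e / tau z (circleMap 0 r θ)).re - k))
        = ENNReal.ofReal (1 / δ - k) * ENNReal.ofReal (2 * r / (1 - r ^ 2) ^ 2) := by
      intro r hr
      have hr0 : 0 < r := hr.1
      have hr1 : 0 < 1 - r ^ 2 := by nlinarith [hr.1, hr.2]
      simp only [norm_circleMap_zero, sq_abs]
      rw [lintegral_const_mul' _ _ ENNReal.ofReal_ne_top, lintegral_const_mul' _ _ ENNReal.ofReal_ne_top,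
        theta_avg e he δ k h0 h1 r hr.1 hr.2, ← ENNReal.ofReal_mul (by positivity), ← ENNReal.ofReal_mul (by positivity),
        ← ENNReal.ofReal_mul']
      · congr 1
        field_simp
      · positivity
      · intro θ
        apply hsign2
        rw [norm_circleMap_zero, abs_of_pos hr.1]; exact hr.2
    rw [setLIntegral_congr_fun measurableSet_Ioo hin, lintegral_const_mul' _ _ ENNReal.ofReal_ne_top, radial_int _ h0.le h1,
      ← ENNReal.ofReal_mul']
    · apply ENNReal.ofReal_le_ofReal
      rw [hk]
      apply le_of_eq
      field_simp
      ring
    · have : 1 ≤ 1 / (1 - δ ^ 2) := by rw [le_div_iff₀ hδ2]; nlinarith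
      linarith
  · apply Measurable.aemeasurable
    have := tau_meas z
    simp only [Function.uncurry_def]
    fun_prop

lemma bathtub (G : ℂ) (E : Set ℂ) (hE : MeasurableSet E) (hfin : muH E ≠ ⊤) :
    ∫⁻ w in E, ENNReal.ofReal ((G / w).re) ∂muH ≤
      ENNReal.ofReal (‖G‖ * Real.sqrt ((muH E).toReal * (1 + (muH E).toReal))) := by
  rcases eq_or_ne (muH E) 0 with hM | hM
  · rw [setLIntegral_measure_zero _ _ hM]; exact zero_le
  rcases eq_or_ne G 0 with hG | hG
  · simp [hG]
  have hG0 : 0 < ‖G‖ := norm_pos_iff.2 hG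
  set M := (muH E).toReal with hMdef
  have hM0 : 0 < M := ENNReal.toReal_pos hM hfin
  set e : ℂ := G / ‖G‖ with he
  have he1 : ‖e‖ = 1 := by rw [he, norm_div, Complex.norm_real, norm_norm, div_self hG0.ne']
  set δ := Real.sqrt (M / (1 + M)) with hδ
  have hδ2 : δ ^ 2 = M / (1 + M) := Real.sq_sqrt (by positivity)
  have hδ0 : 0 < δ := Real.sqrt_pos.2 (by positivity)
  have hδ1 : δ < 1 := by
    rw [hδ, Real.sqrt_lt' one_pos, div_lt_iff₀ (by positivity)]; linarith
  set k := (1 + δ ^ 2) / (2 * δ) with hk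
  have hk0 : 0 < k := by positivity
  have hb := bath_ball e he1 δ hδ0 hδ1
  rw [← hk] at hb
  have hre := Complex.measurable_re
  have step : ∀ w, ENNReal.ofReal ((G / w).re) ≤ ENNReal.ofReal ‖G‖ * (ENNReal.ofReal k + ENNReal.ofReal ((e / w).re - k)) := by
    intro w
    have : (G / w).re = ‖G‖ * (e / w).re := by
      rw [← Complex.re_ofReal_mul]
      congr 1
      rw [he]
      have : (‖G‖:ℂ) ≠ 0 := by exact_mod_cast hG0.ne'
      field_simp
    rw [this, ENNReal.ofReal_mul hG0.le]
    gcongr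
    calc ENNReal.ofReal (e / w).re = ENNReal.ofReal (k + ((e / w).re - k)) := by congr 1; ring
      _ ≤ _ := ENNReal.ofReal_add_le
  calc ∫⁻ w in E, ENNReal.ofReal ((G / w).re) ∂muH
      ≤ ∫⁻ w in E, ENNReal.ofReal ‖G‖ * (ENNReal.ofReal k + ENNReal.ofReal ((e / w).re - k)) ∂muH := lintegral_mono fun w => step w
    _ = ENNReal.ofReal ‖G‖ * (ENNReal.ofReal k * muH E + ∫⁻ w in E, ENNReal.ofReal ((e / w).re - k) ∂muH) := by
        rw [lintegral_const_mul' _ _ ENNReal.ofReal_ne_top, lintegral_add_left (by fun_prop), setLIntegral_const]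
    _ ≤ ENNReal.ofReal ‖G‖ * (ENNReal.ofReal k * muH E + ENNReal.ofReal (δ / 2)) := by
        gcongr
        exact (setLIntegral_le_lintegral _ _).trans hb
    _ = _ := by
        rw [← ENNReal.ofReal_toReal hfin, ← hMdef, ← ENNReal.ofReal_mul hk0.le, ← ENNReal.ofReal_add (by positivity) (by positivity),
          ← ENNReal.ofReal_mul hG0.le]
        congr 2
        have h5 : Real.sqrt (M * (1 + M)) = δ * (1 + M) := by
          rw [Real.sqrt_eq_iff_mul_self_eq (by positivity) (by positivity)]
          have : δ * (1 + M) * (δ * (1 + M)) = δ ^ 2 * (1 + M) ^ 2 := by ring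
          rw [this, hδ2]; field_simp
        rw [h5, hk]
        have hMδ : M = δ ^ 2 * (1 + M) := by rw [hδ2]; field_simp
        rw [div_mul_eq_mul_div, div_add_div _ _ (by positivity) (by positivity), div_eq_iff (by positivity)]
        linear_combination 2 * hMδ

noncomputable def Dv (u : ℂ → ℝ) (ζ v : ℂ) : ℝ :=
  fderiv ℝ u ζ 1 * v.re + fderiv ℝ u ζ Complex.I * v.im

lemma Dv_eq (u : ℂ → ℝ) (ζ v : ℂ) : Dv u ζ v = fderiv ℝ u ζ v := by
  have : v = v.re • (1:ℂ) + v.im • Complex.I := by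
    apply Complex.ext <;> simp
  conv_rhs => rw [this]
  rw [map_add, map_smul, map_smul, Dv, smul_eq_mul, smul_eq_mul]
  ring

lemma Dv_smul (u : ℂ → ℝ) (ζ v : ℂ) (c : ℝ) : Dv u ζ (c * v) = c * Dv u ζ v := by
  simp [Dv]; ring

lemma Dv_meas (u : ℂ → ℝ) : Measurable fun p : ℂ × ℂ => Dv u p.1 p.2 := by
  unfold Dv
  have h1 := (measurable_fderiv_apply_const ℝ u (1:ℂ)).comp (measurable_fst : Measurable (Prod.fst : ℂ × ℂ → ℂ))
  have h2 := (measurable_fderiv_apply_const ℝ u Complex.I).comp (measurable_fst : Measurable (Prod.fst : ℂ × ℂ → ℂ))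
  have h3 := Complex.measurable_re.comp (measurable_snd : Measurable (Prod.snd : ℂ × ℂ → ℂ))
  have h4 := Complex.measurable_im.comp (measurable_snd : Measurable (Prod.snd : ℂ × ℂ → ℂ))
  exact (h1.mul h3).add (h2.mul h4)

lemma ray_vec {z w : ℂ} (hz : ‖z‖ < 1) (hw : ‖w‖ < 1) :
    (((1 - ‖w‖ ^ 2) / ‖w‖ ^ 2 : ℝ) : ℂ) * (-(1 - (‖z‖:ℂ) ^ 2) / (1 - (starRingEnd ℂ) z * w) ^ 2 * w)
      = ((1 - ‖tau z w‖ ^ 2 : ℝ) : ℂ) * ((starRingEnd ℂ) (tau (tau z w) z))⁻¹ := by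
  have hd := tau_den_ne hz hw.le
  have hd' : 1 - z * (starRingEnd ℂ) w ≠ 0 := by
    intro h; apply hd
    have := congrArg (starRingEnd ℂ) h
    simpa using this
  have h2 := one_sub_normsq_ne hz
  have hd2 : 1 - w * (starRingEnd ℂ) z ≠ 0 := by rwa [mul_comm]
  have hd3 : 1 - (starRingEnd ℂ) w * z ≠ 0 := by rwa [mul_comm]
  rcases eq_or_ne w 0 with rfl | hw0
  · simp [tau]
  have hwc : (starRingEnd ℂ) w ≠ 0 := by simpa using hw0
  have ht : tau (tau z w) z = -w * (1 - z * (starRingEnd ℂ) w) / (1 - (starRingEnd ℂ) z * w) := by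
    have a1 : tau z w - z = -w * (1 - (‖z‖:ℂ) ^ 2) / (1 - (starRingEnd ℂ) z * w) := by
      rw [sq_norm, tau]; field_simp; ring
    have a2 : 1 - (starRingEnd ℂ) (tau z w) * z = (1 - (‖z‖:ℂ) ^ 2) / (1 - z * (starRingEnd ℂ) w) := by
      rw [sq_norm, tau, map_div₀]; simp only [map_sub, map_mul, map_one, Complex.conj_conj]; field_simp; ring
    rw [tau, a1, a2]
    field_simp
  rw [tau_norm hz hw.le, ht]
  simp only [map_div₀, map_sub, map_mul, map_neg, map_one, Complex.conj_conj]
  push_cast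
  rw [sq_norm w, sq_norm (1 - _)]
  simp only [map_sub, map_mul, map_one, Complex.conj_conj]
  field_simp

lemma ray_theta (u : ℂ → ℝ) (hc : Continuous u) (hout : ∀ ζ, 1 ≤ ‖ζ‖ → u ζ = 0)
    (hd : ∀ ζ, ‖ζ‖ < 1 → DifferentiableAt ℝ u ζ) {z : ℂ} (hz : ‖z‖ < 1) (a : ℝ → ENNReal) (θ : ℝ) :
    ∫⁻ t in Set.Ioo 0 (u z), a t * (1 + ∫⁻ r in Set.Ioo (0:ℝ) 1, ENNReal.ofReal r *
        (ENNReal.ofReal (2 / (1 - ‖circleMap 0 r θ‖ ^ 2) ^ 2) * (if t < u (tau z (circleMap 0 r θ)) then 1 else 0)))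
    ≤ ∫⁻ r in Set.Ioo (0:ℝ) 1, ENNReal.ofReal r *
        (ENNReal.ofReal (((1 - ‖circleMap 0 r θ‖ ^ 2) ^ 2)⁻¹) *
        (ENNReal.ofReal (1 - ‖tau z (circleMap 0 r θ)‖ ^ 2) *
          ENNReal.ofReal (- Dv u (tau z (circleMap 0 r θ)) ((starRingEnd ℂ) (tau (tau z (circleMap 0 r θ)) z))⁻¹) *
          (if u (tau z (circleMap 0 r θ)) < u z then a (u (tau z (circleMap 0 r θ))) else 0))) := by
  have h00 : tau z (circleMap 0 0 θ) = z := by simp [tau, circleMap]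
  have hn : ∀ r ∈ Set.Icc (0:ℝ) 1, ‖circleMap 0 r θ‖ = r := by
    intro r hr; rw [norm_circleMap_zero, abs_of_nonneg hr.1]
  have hcm : ∀ r : ℝ, HasDerivAt (fun r : ℝ => circleMap 0 r θ) (Complex.exp (θ * Complex.I)) r := by
    intro r
    have : HasDerivAt (fun r : ℝ => (r:ℂ) * Complex.exp (θ * Complex.I)) (1 * Complex.exp (θ * Complex.I)) r :=
      (Complex.ofRealCLM.hasDerivAt (x := r)).mul_const _
    simpa [circleMap] using this
  have hcd : ∀ r ∈ Set.Icc (0:ℝ) 1, HasDerivAt (fun r : ℝ => tau z (circleMap 0 r θ))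
      (-(1 - (‖z‖:ℂ) ^ 2) / (1 - (starRingEnd ℂ) z * circleMap 0 r θ) ^ 2 * Complex.exp (θ * Complex.I)) r := by
    intro r hr
    have := (tau_deriv hz (w := circleMap 0 r θ) (by rw [hn r hr]; exact hr.2)).comp r (hcm r)
    exact this
  have key := ray_lemma (fun r => u (tau z (circleMap 0 r θ)))
    (fun r => fderiv ℝ u (tau z (circleMap 0 r θ)) (-(1 - (‖z‖:ℂ) ^ 2) / (1 - (starRingEnd ℂ) z * circleMap 0 r θ) ^ 2 * Complex.exp (θ * Complex.I)))
    (fun r hr => (hc.continuousAt.comp (hcd r hr).continuousAt).continuousWithinAt)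
    (by apply hout; rw [tau_bdry hz]; rw [hn 1 (by simp)])
    (fun r hr => by
      have hr' : r ∈ Set.Icc (0:ℝ) 1 := ⟨hr.1.le, hr.2.le⟩
      have h1 : ‖tau z (circleMap 0 r θ)‖ < 1 := tau_mem hz (by rw [hn r hr']; exact hr.2)
      exact (hd _ h1).hasFDerivAt.comp_hasDerivAt r (hcd r hr')) a
  simp only [h00] at key
  refine le_trans (le_of_eq ?_) (key.trans (le_of_eq ?_))
  · refine lintegral_congr fun t => ?_
    congr 2
    refine setLIntegral_congr_fun measurableSet_Ioo fun r hr => ?_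
    have hr' : r ∈ Set.Icc (0:ℝ) 1 := ⟨hr.1.le, hr.2.le⟩
    simp only [hn r hr']
    split_ifs
    · rw [mul_one, ← ENNReal.ofReal_mul hr.1.le]; congr 1; ring
    · simp
  · refine setLIntegral_congr_fun measurableSet_Ioo fun r hr => ?_
    have hr' : r ∈ Set.Icc (0:ℝ) 1 := ⟨hr.1.le, hr.2.le⟩
    have hr0 : 0 < r := hr.1
    have hr1 : 0 < 1 - r ^ 2 := by nlinarith [hr.1, hr.2]
    have hw1 : ‖circleMap 0 r θ‖ < 1 := by rw [hn r hr']; exact hr.2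
    have hv := ray_vec hz hw1
    have hpos : 0 ≤ 1 - ‖tau z (circleMap 0 r θ)‖ ^ 2 := by
      have := tau_mem hz hw1
      nlinarith [norm_nonneg (tau z (circleMap 0 r θ))]
    set ζ := tau z (circleMap 0 r θ) with hζ
    set V := ((starRingEnd ℂ) (tau ζ z))⁻¹ with hV
    rw [hn r hr'] at hv ⊢
    set A := -(1 - (‖z‖:ℂ) ^ 2) / (1 - (starRingEnd ℂ) z * circleMap 0 r θ) ^ 2 with hA
    have e1 : (A * Complex.exp (θ * Complex.I)) = ((r / (1 - r ^ 2) : ℝ) : ℂ) * (((1 - ‖ζ‖ ^ 2 : ℝ) : ℂ) * V) := by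
      rw [← hv]
      have b1 : (r:ℂ) ≠ 0 := by exact_mod_cast hr0.ne'
      have b2 : (1 - (r:ℂ) ^ 2) ≠ 0 := by exact_mod_cast hr1.ne'
      rw [circleMap]
      push_cast
      field_simp
      ring
    rw [← Dv_eq, e1, Dv_smul, Dv_smul]
    have e2 : -(r / (1 - r ^ 2) * ((1 - ‖ζ‖ ^ 2) * Dv u ζ V)) = r / (1 - r ^ 2) * ((1 - ‖ζ‖ ^ 2) * - Dv u ζ V) := by ring
    rw [e2, ENNReal.ofReal_mul (by positivity), ENNReal.ofReal_mul hpos]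
    have e3 : ENNReal.ofReal r * ENNReal.ofReal ((1 - r ^ 2) ^ 2)⁻¹ = ENNReal.ofReal (r / (1 - r ^ 2)) * ENNReal.ofReal (1 / (1 - r ^ 2)) := by
      rw [← ENNReal.ofReal_mul (by positivity), ← ENNReal.ofReal_mul (by positivity)]
      congr 1
      field_simp
    rw [← mul_assoc (ENNReal.ofReal r), e3]
    ring

lemma ball_muH (c : ℝ) (hc : 0 ≤ c) (g : ℂ → ENNReal) :
    ∫⁻ w in ball (0:ℂ) 1, ENNReal.ofReal (c * ((1 - ‖w‖ ^ 2) ^ 2)⁻¹) * g w = ENNReal.ofReal (c * Real.pi) * ∫⁻ w, g w ∂muH := by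
  rw [lint_muH, ← lintegral_const_mul' _ _ ENNReal.ofReal_ne_top]
  refine lintegral_congr fun w => ?_
  have := Real.pi_pos
  rw [← mul_assoc, ← ENNReal.ofReal_mul (by positivity)]
  congr 2
  field_simp

noncomputable def Gk (u : ℂ → ℝ) (a : ℝ → ENNReal) (z ζ : ℂ) : ENNReal :=
  ENNReal.ofReal (1 - ‖ζ‖ ^ 2) * ENNReal.ofReal (- Dv u ζ ((starRingEnd ℂ) (tau ζ z))⁻¹) *
          (if u ζ < u z then a (u ζ) else 0)

lemma Gk_meas (u : ℂ → ℝ) (hu : Measurable u) (a : ℝ → ENNReal) (ha : Measurable a) :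
    Measurable fun p : ℂ × ℂ => Gk u a p.1 p.2 := by
  unfold Gk
  have h1 : Measurable fun p : ℂ × ℂ => tau p.2 p.1 := tau_meas2.comp (measurable_snd.prodMk measurable_fst)
  have h2 : Measurable fun p : ℂ × ℂ => ((starRingEnd ℂ) (tau p.2 p.1))⁻¹ :=
    (Complex.continuous_conj.measurable.comp h1).inv
  have h3 : Measurable fun p : ℂ × ℂ => Dv u p.2 ((starRingEnd ℂ) (tau p.2 p.1))⁻¹ :=
    (Dv_meas u).comp (measurable_snd.prodMk h2)
  refine Measurable.mul (Measurable.mul (by fun_prop) h3.neg.ennreal_ofReal) ?_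
  refine Measurable.ite (measurableSet_lt (hu.comp measurable_snd) (hu.comp measurable_fst)) (ha.comp (hu.comp measurable_snd)) measurable_const

lemma circ_meas : Measurable fun p : ℝ × ℝ => circleMap 0 p.2 p.1 := by
  unfold circleMap; fun_prop

lemma point_ineq (u : ℂ → ℝ) (hc : Continuous u) (hout : ∀ ζ, 1 ≤ ‖ζ‖ → u ζ = 0)
    (hd : ∀ ζ, ‖ζ‖ < 1 → DifferentiableAt ℝ u ζ) {z : ℂ} (hz : ‖z‖ < 1) (a : ℝ → ENNReal) (ha : Measurable a) :
    ∫⁻ t in Set.Ioo 0 (u z), a t * (1 + Mf muH u t) ≤ ENNReal.ofReal (1 / 2) * ∫⁻ ζ, Gk u a z ζ ∂muH := by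
  have hpi := Real.pi_pos
  have htm := tau_meas z
  have hum := hc.measurable
  have hM : ∀ t, ∫⁻ θ in Set.Ioo (-Real.pi) Real.pi, ∫⁻ r in Set.Ioo (0:ℝ) 1, ENNReal.ofReal r *
        (ENNReal.ofReal (2 / (1 - ‖circleMap 0 r θ‖ ^ 2) ^ 2) * (if t < u (tau z (circleMap 0 r θ)) then 1 else 0))
        = ENNReal.ofReal (2 * Real.pi) * Mf muH u t := by
    intro t
    have hm1 : Measurable fun w => (if t < u (tau z w) then (1:ENNReal) else 0) :=
      Measurable.ite (measurableSet_lt measurable_const (hum.comp htm)) measurable_const measurable_const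
    rw [← polar_ball 1 (fun w => ENNReal.ofReal (2 / (1 - ‖w‖ ^ 2) ^ 2) * (if t < u (tau z w) then 1 else 0)) (by fun_prop)]
    simp only [div_eq_mul_inv]
    rw [ball_muH 2 (by norm_num) , muH_inv hz (fun w => if t < u w then 1 else 0)]
    congr 1
    rw [Mf, ← lintegral_indicator_one (measurableSet_lt measurable_const hum)]
    refine lintegral_congr fun w => ?_
    simp [Set.indicator]
  have hR : ∫⁻ θ in Set.Ioo (-Real.pi) Real.pi, ∫⁻ r in Set.Ioo (0:ℝ) 1, ENNReal.ofReal r *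
        (ENNReal.ofReal (((1 - ‖circleMap 0 r θ‖ ^ 2) ^ 2)⁻¹) * Gk u a z (tau z (circleMap 0 r θ)))
      = ENNReal.ofReal Real.pi * ∫⁻ ζ, Gk u a z ζ ∂muH := by
    have hm1 : Measurable fun w => Gk u a z (tau z w) :=
      (Gk_meas u hum a ha).comp (f := fun w => (z, tau z w)) (measurable_const.prodMk htm)
    rw [← polar_ball 1 (fun w => ENNReal.ofReal (((1 - ‖w‖ ^ 2) ^ 2)⁻¹) * Gk u a z (tau z w)) (by fun_prop)]
    have := ball_muH 1 (by norm_num) (fun w => Gk u a z (tau z w))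
    rw [muH_inv hz (fun w => Gk u a z w)] at this
    simpa using this
  have key : ENNReal.ofReal (2 * Real.pi) * ∫⁻ t in Set.Ioo 0 (u z), a t * (1 + Mf muH u t)
      ≤ ENNReal.ofReal Real.pi * ∫⁻ ζ, Gk u a z ζ ∂muH := by
    rw [← hR]
    refine le_trans (le_of_eq ?_) (lintegral_mono fun θ => ray_theta u hc hout hd hz a θ)
    have hms : Measurable fun p : (ℝ × ℝ) × ℝ => ENNReal.ofReal p.2 *
        (ENNReal.ofReal (2 / (1 - ‖circleMap 0 p.2 p.1.1‖ ^ 2) ^ 2) * (if p.1.2 < u (tau z (circleMap 0 p.2 p.1.1)) then 1 else 0)) := by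
      have hcm : Measurable fun p : (ℝ × ℝ) × ℝ => circleMap 0 p.2 p.1.1 := circ_meas.comp
        (f := fun p : (ℝ × ℝ) × ℝ => (p.1.1, p.2)) (by fun_prop)
      have hm1 : Measurable fun p : (ℝ × ℝ) × ℝ => (if p.1.2 < u (tau z (circleMap 0 p.2 p.1.1)) then (1:ENNReal) else 0) :=
        Measurable.ite (measurableSet_lt (by fun_prop) (hum.comp (htm.comp hcm))) measurable_const measurable_const
      fun_prop
    have hms2 := hms.lintegral_prod_right' (ν := volume.restrict (Set.Ioo (0:ℝ) 1))
    rw [lintegral_lintegral_swap]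
    · rw [← lintegral_const_mul' _ _ ENNReal.ofReal_ne_top]
      refine lintegral_congr fun t => ?_
      have hmt : Measurable fun θ => (∫⁻ r in Set.Ioo (0:ℝ) 1, ENNReal.ofReal r *
        (ENNReal.ofReal (2 / (1 - ‖circleMap 0 r θ‖ ^ 2) ^ 2) * (if t < u (tau z (circleMap 0 r θ)) then 1 else 0))) :=
        hms2.comp (f := fun θ : ℝ => (θ, t)) (by fun_prop)
      rw [lintegral_const_mul _ (by fun_prop), lintegral_add_left measurable_const, hM, lintegral_const,
        Measure.restrict_apply_univ, Real.volume_Ioo]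
      have : Real.pi - -Real.pi = 2 * Real.pi := by ring
      rw [this]
      ring
    · apply Measurable.aemeasurable
      exact (ha.comp measurable_snd).mul (measurable_const.add hms2)
  have h2 : ENNReal.ofReal (1 / (2 * Real.pi)) * ENNReal.ofReal (2 * Real.pi) = 1 := by
    rw [← ENNReal.ofReal_mul (by positivity), ← ENNReal.ofReal_one]; congr 1; field_simp
  have h3 : ENNReal.ofReal (1 / (2 * Real.pi)) * ENNReal.ofReal (Real.pi) = ENNReal.ofReal (1 / 2) := by
    rw [← ENNReal.ofReal_mul (by positivity)]; congr 1; field_simp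
  have k2 := mul_le_mul_right key (ENNReal.ofReal (1 / (2 * Real.pi)))
  rw [← mul_assoc, ← mul_assoc, h2, h3, one_mul] at k2
  exact k2

instance muH_sf : SFinite muH := by unfold muH; infer_instance

lemma ae_muH : ∀ᵐ z ∂muH, ‖z‖ < 1 := by
  have h1 : ∀ᵐ z ∂(volume.restrict (ball (0 : ℂ) 1)), ‖z‖ < 1 := by
    filter_upwards [ae_restrict_mem measurableSet_ball] with z hz
    exact mem_ball_zero_iff.1 hz
  exact (withDensity_absolutelyContinuous _ _).ae_le h1

lemma muH_lvl (u : ℂ → ℝ) (hu : Measurable u) {ζ : ℂ} (hζ : ‖ζ‖ < 1) (t : ℝ) :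
    muH {w | t < u (tau ζ w)} = Mf muH u t := by
  have h := muH_inv hζ (fun w => ({w | t < u w} : Set ℂ).indicator 1 w)
  rw [lintegral_indicator_one (measurableSet_lt measurable_const hu)] at h
  have hm : MeasurableSet {w | t < u (tau ζ w)} := measurableSet_lt measurable_const (hu.comp (tau_meas ζ))
  rw [Mf, ← h, ← lintegral_indicator_one hm]
  rfl

lemma Gk_inner (u : ℂ → ℝ) (hu : Measurable u) (a : ℝ → ENNReal) (ha0 : ∀ t ≤ 0, a t = 0)
    (hfin : ∀ t > 0, Mf muH u t ≠ ⊤) {ζ : ℂ} (hζ : ‖ζ‖ < 1) :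
    ∫⁻ z, Gk u a z ζ ∂muH ≤ ENNReal.ofReal (1 - ‖ζ‖ ^ 2) *
      ENNReal.ofReal (‖fderiv ℝ u ζ‖ * Real.sqrt ((Mf muH u (u ζ)).toReal * (1 + (Mf muH u (u ζ)).toReal))) * a (u ζ) := by
  rcases le_or_gt (u ζ) 0 with h0 | h0
  · have : ∀ z, Gk u a z ζ = 0 := by intro z; simp [Gk, ha0 _ h0]
    simp [this]
  set G : ℂ := -(((fderiv ℝ u ζ 1 : ℝ) : ℂ) + ((fderiv ℝ u ζ Complex.I : ℝ) : ℂ) * Complex.I) with hG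
  have hGn : ‖G‖ ≤ ‖fderiv ℝ u ζ‖ := by
    have h1 : ‖G‖ * ‖G‖ = - fderiv ℝ u ζ G := by
      rw [← Dv_eq, Complex.norm_mul_self_eq_normSq, Complex.normSq_apply, Dv]
      simp [hG]; ring
    have h2 : - fderiv ℝ u ζ G ≤ ‖fderiv ℝ u ζ‖ * ‖G‖ :=
      (neg_le_abs _).trans ((fderiv ℝ u ζ).le_opNorm G)
    rcases eq_or_ne ‖G‖ 0 with h | h
    · rw [h]; positivity
    · have : 0 < ‖G‖ := lt_of_le_of_ne (norm_nonneg _) h.symm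
      exact le_of_mul_le_mul_right (h1 ▸ h2) this
  have hre : ∀ w : ℂ, - Dv u ζ ((starRingEnd ℂ) w)⁻¹ = (G / w).re := by
    intro w
    simp only [Dv, hG, Complex.div_re, Complex.inv_re, Complex.inv_im]
    simp
    ring
  set E : Set ℂ := {w | u ζ < u (tau ζ w)} with hE
  have hEm : MeasurableSet E := measurableSet_lt measurable_const (hu.comp (tau_meas ζ))
  have hμE : muH E = Mf muH u (u ζ) := muH_lvl u hu hζ _
  have hb := bathtub G E hEm (by rw [hμE]; exact hfin _ h0)
  rw [hμE] at hb
  have hrem := Complex.measurable_re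
  rw [← muH_inv hζ]
  calc ∫⁻ w, Gk u a (tau ζ w) ζ ∂muH = ∫⁻ w, ENNReal.ofReal (1 - ‖ζ‖ ^ 2) * (E.indicator (fun w => ENNReal.ofReal (G / w).re) w * a (u ζ)) ∂muH := by
        apply lintegral_congr_ae
        filter_upwards [ae_muH] with w hw
        rw [Gk, tau_tau hζ hw.le, hre, mul_assoc]
        congr 1
        simp only [Set.indicator, hE, Set.mem_ofPred_eq]
        split_ifs <;> simp
    _ = ENNReal.ofReal (1 - ‖ζ‖ ^ 2) * ((∫⁻ w in E, ENNReal.ofReal (G / w).re ∂muH) * a (u ζ)) := by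
        have hm : Measurable (E.indicator (fun w => ENNReal.ofReal (G / w).re)) := Measurable.indicator (by fun_prop) hEm
        rw [lintegral_const_mul' _ _ ENNReal.ofReal_ne_top, lintegral_mul_const _ hm, lintegral_indicator hEm]
    _ ≤ _ := by
        rw [mul_assoc]
        gcongr
        refine hb.trans (ENNReal.ofReal_le_ofReal ?_)
        gcongr

lemma mid_ineq (u : ℂ → ℝ) (hc : Continuous u) (hout : ∀ ζ, 1 ≤ ‖ζ‖ → u ζ = 0)
    (hd : ∀ ζ, ‖ζ‖ < 1 → DifferentiableAt ℝ u ζ) (hfin : ∀ t > 0, Mf muH u t ≠ ⊤)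
    (a : ℝ → ENNReal) (ha : Measurable a) (ha0 : ∀ t ≤ 0, a t = 0) :
    ∫⁻ t in Set.Ioi 0, a t * (1 + Mf muH u t) * Mf muH u t ≤ ENNReal.ofReal (1 / 2) *
      ∫⁻ ζ, ENNReal.ofReal (1 - ‖ζ‖ ^ 2) *
      ENNReal.ofReal (‖fderiv ℝ u ζ‖ * Real.sqrt ((Mf muH u (u ζ)).toReal * (1 + (Mf muH u (u ζ)).toReal))) * a (u ζ) ∂muH := by
  have hum := hc.measurable
  have hMm : Measurable (Mf muH u) := Mf_meas _ _
  have hGm := Gk_meas u hum a ha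
  calc ∫⁻ t in Set.Ioi 0, a t * (1 + Mf muH u t) * Mf muH u t
      = ∫⁻ t in Set.Ioi 0, ∫⁻ z, a t * (1 + Mf muH u t) * (if t < u z then 1 else 0) ∂muH := by
        refine lintegral_congr fun t => ?_
        have hm1 : Measurable fun z => (if t < u z then (1:ENNReal) else 0) :=
          Measurable.ite (measurableSet_lt measurable_const hum) measurable_const measurable_const
        rw [lintegral_const_mul _ hm1]
        congr 1
        rw [Mf, ← lintegral_indicator_one (measurableSet_lt measurable_const hum)]
        refine lintegral_congr fun w => ?_
        simp [Set.indicator]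
    _ = ∫⁻ z, (∫⁻ t in Set.Ioi 0, a t * (1 + Mf muH u t) * (if t < u z then 1 else 0)) ∂muH := by
        rw [lintegral_lintegral_swap]
        apply Measurable.aemeasurable
        have hm1 : Measurable fun p : ℝ × ℂ => (if p.1 < u p.2 then (1:ENNReal) else 0) :=
          Measurable.ite (measurableSet_lt measurable_fst (hum.comp measurable_snd)) measurable_const measurable_const
        have hm2 : Measurable fun p : ℝ × ℂ => a p.1 * (1 + Mf muH u p.1) := by fun_prop
        exact hm2.mul hm1
    _ = ∫⁻ z, (∫⁻ t in Set.Ioo 0 (u z), a t * (1 + Mf muH u t)) ∂muH := by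
        refine lintegral_congr fun z => ?_
        rw [← lintegral_indicator measurableSet_Ioi, ← lintegral_indicator measurableSet_Ioo]
        refine lintegral_congr fun t => ?_
        simp only [Set.indicator, Set.mem_Ioi, Set.mem_Ioo]
        by_cases h1 : 0 < t <;> by_cases h2 : t < u z <;> simp [h1, h2]
    _ ≤ ∫⁻ z, ENNReal.ofReal (1 / 2) * ∫⁻ ζ, Gk u a z ζ ∂muH ∂muH := by
        apply lintegral_mono_ae
        filter_upwards [ae_muH] with z hz
        exact point_ineq u hc hout hd hz a ha
    _ = ENNReal.ofReal (1 / 2) * ∫⁻ ζ, ∫⁻ z, Gk u a z ζ ∂muH ∂muH := by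
        rw [lintegral_const_mul' _ _ ENNReal.ofReal_ne_top, lintegral_lintegral_swap hGm.aemeasurable]
    _ ≤ _ := by
        gcongr 1
        apply lintegral_mono_ae
        filter_upwards [ae_muH] with ζ hζ
        exact Gk_inner u hum a ha0 hfin hζ

lemma hI_lemma (u : ℂ → ℝ) (hc : Continuous u) (hout : ∀ ζ, 1 ≤ ‖ζ‖ → u ζ = 0)
    (hd : ∀ ζ, ‖ζ‖ < 1 → DifferentiableAt ℝ u ζ) (hfin : ∀ t > 0, Mf muH u t ≠ ⊤)
    (β : ℝ → ℝ) (hβ : Measurable β) (hβ0 : ∀ t, 0 ≤ β t) :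
    8 * (∫⁻ t in Set.Ioi 0, ENNReal.ofReal (β t * Real.sqrt ((Mf muH u t).toReal * (1 + (Mf muH u t).toReal))))
      ≤ ENNReal.ofReal (1 / Real.pi) * (∫⁻ ζ in ball (0:ℂ) 1, ENNReal.ofReal (‖fderiv ℝ u ζ‖ ^ 2))
        + 4 * ∫⁻ x, ENNReal.ofReal (β (u x) ^ 2) ∂muH := by
  have hum := hc.measurable
  have hMm : Measurable (Mf muH u) := Mf_meas _ _
  set R : ℝ → ℝ := fun t => Real.sqrt ((Mf muH u t).toReal * (1 + (Mf muH u t).toReal)) with hR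
  have hR0 : ∀ t, 0 ≤ R t := fun t => Real.sqrt_nonneg _
  have hRm : Measurable R := by
    have := hMm.ennreal_toReal
    exact (this.mul (measurable_const.add this)).sqrt
  have hR2 : ∀ t, R t * R t = (Mf muH u t).toReal * (1 + (Mf muH u t).toReal) := fun t =>
    Real.mul_self_sqrt (by positivity)
  set a : ℝ → ENNReal := fun t => if 0 < t then ENNReal.ofReal (β t / R t) else 0 with ha
  have ham : Measurable a := Measurable.ite measurableSet_Ioi (by fun_prop) measurable_const
  have ha0 : ∀ t ≤ 0, a t = 0 := fun t ht => by simp [ha, not_lt.2 ht]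
  have key := mid_ineq u hc hout hd hfin a ham ha0
  have hL : ∫⁻ t in Set.Ioi 0, a t * (1 + Mf muH u t) * Mf muH u t = ∫⁻ t in Set.Ioi 0, ENNReal.ofReal (β t * R t) := by
    refine setLIntegral_congr_fun measurableSet_Ioi fun t ht => ?_
    have ht' : 0 < t := ht
    have hf := hfin t ht'
    set m := (Mf muH u t).toReal with hm
    have hm0 : 0 ≤ m := ENNReal.toReal_nonneg
    have hMM : Mf muH u t = ENNReal.ofReal m := (ENNReal.ofReal_toReal hf).symm
    simp only [ha, if_pos ht']
    rw [hMM, ← ENNReal.ofReal_one, ← ENNReal.ofReal_add zero_le_one hm0, mul_assoc, ← ENNReal.ofReal_mul (by positivity),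
      ← ENNReal.ofReal_mul (div_nonneg (hβ0 t) (hR0 t))]
    congr 1
    have h2 := hR2 t
    rw [← hm] at h2
    rw [mul_comm (1 + m), ← h2]
    rcases eq_or_ne (R t) 0 with h | h
    · simp [h]
    · field_simp
  rw [hL] at key
  have hE : ENNReal.ofReal (1 / Real.pi) * (∫⁻ ζ in ball (0:ℂ) 1, ENNReal.ofReal (‖fderiv ℝ u ζ‖ ^ 2))
      = ∫⁻ ζ, ENNReal.ofReal ((1 - ‖ζ‖ ^ 2) ^ 2 * ‖fderiv ℝ u ζ‖ ^ 2) ∂muH := by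
    rw [lint_muH, ← lintegral_const_mul' _ _ ENNReal.ofReal_ne_top]
    refine setLIntegral_congr_fun measurableSet_ball fun ζ hζ => ?_
    rw [mem_ball_zero_iff] at hζ
    have h1 : 0 < 1 - ‖ζ‖ ^ 2 := by nlinarith [norm_nonneg ζ]
    have := Real.pi_pos
    rw [← ENNReal.ofReal_mul (by positivity), ← ENNReal.ofReal_mul (by positivity)]
    congr 1
    field_simp
  rw [hE]
  have h8 : (8:ENNReal) = ENNReal.ofReal 8 := by simp
  have h4 : (4:ENNReal) = ENNReal.ofReal 4 := by simp
  have hfm : Measurable fun ζ => ‖fderiv ℝ u ζ‖ := (measurable_fderiv ℝ u).norm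
  calc _ ≤ 8 * _ := mul_le_mul_right key 8
    _ = ∫⁻ ζ, ENNReal.ofReal 4 * (ENNReal.ofReal (1 - ‖ζ‖ ^ 2) * ENNReal.ofReal (‖fderiv ℝ u ζ‖ * R (u ζ)) * a (u ζ)) ∂muH := by
        rw [← mul_assoc, h8, ← ENNReal.ofReal_mul (by norm_num), lintegral_const_mul' _ _ ENNReal.ofReal_ne_top,
          (by norm_num : (8:ℝ) * (1 / 2) = 4)]
    _ ≤ ∫⁻ ζ, (ENNReal.ofReal ((1 - ‖ζ‖ ^ 2) ^ 2 * ‖fderiv ℝ u ζ‖ ^ 2) + ENNReal.ofReal 4 * ENNReal.ofReal (β (u ζ) ^ 2)) ∂muH := by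
        apply lintegral_mono_ae
        filter_upwards [ae_muH] with ζ hζ
        have h1 : 0 < 1 - ‖ζ‖ ^ 2 := by nlinarith [norm_nonneg ζ]
        have hb := hβ0 (u ζ)
        have hr := hR0 (u ζ)
        have hn := norm_nonneg (fderiv ℝ u ζ)
        rw [← ENNReal.ofReal_mul (p := 4) (q := β (u ζ) ^ 2) (by norm_num), ← ENNReal.ofReal_add (by positivity) (by positivity)]
        simp only [ha]
        split_ifs
        · rw [← ENNReal.ofReal_mul h1.le, ← ENNReal.ofReal_mul (by positivity), ← ENNReal.ofReal_mul (p := 4) (by norm_num)]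
          apply ENNReal.ofReal_le_ofReal
          have h3 : R (u ζ) * (β (u ζ) / R (u ζ)) ≤ β (u ζ) := by
            rcases eq_or_ne (R (u ζ)) 0 with h | h
            · rw [h]; simpa using hb
            · apply le_of_eq; field_simp
          have h5 : (1 - ‖ζ‖ ^ 2) * (‖fderiv ℝ u ζ‖ * R (u ζ)) * (β (u ζ) / R (u ζ)) ≤ ((1 - ‖ζ‖ ^ 2) * ‖fderiv ℝ u ζ‖) * β (u ζ) := by
            calc _ = ((1 - ‖ζ‖ ^ 2) * ‖fderiv ℝ u ζ‖) * (R (u ζ) * (β (u ζ) / R (u ζ))) := by ring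
              _ ≤ _ := by gcongr
          nlinarith [sq_nonneg ((1 - ‖ζ‖ ^ 2) * ‖fderiv ℝ u ζ‖ - 2 * β (u ζ))]
        · simp
    _ = _ := by
        rw [lintegral_add_left (by fun_prop), lintegral_const_mul' _ _ ENNReal.ofReal_ne_top, h4]

lemma Mf_fin (u : ℂ → ℝ) (hu : Measurable u) (b : ℝ) (hb : 0 < b)
    (hJ : ∫⁻ x, ENNReal.ofReal (u x ^ b) ∂muH ≠ ⊤) : ∀ t > 0, Mf muH u t ≠ ⊤ := by
  intro t ht
  have h1 := mul_meas_ge_le_lintegral (μ := muH) (f := fun x => ENNReal.ofReal (u x ^ b)) (by fun_prop) (ENNReal.ofReal (t ^ b))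
  have hpos : 0 < t ^ b := Real.rpow_pos_of_pos ht b
  have h2 : Mf muH u t ≤ muH {x | ENNReal.ofReal (t ^ b) ≤ ENNReal.ofReal (u x ^ b)} := by
    apply measure_mono
    intro x hx
    have hx' : t < u x := hx
    exact ENNReal.ofReal_le_ofReal (Real.rpow_le_rpow ht.le hx'.le hb.le)
  intro htop
  rw [htop, top_le_iff] at h2
  rw [h2, ENNReal.mul_top (by simpa using hpos), top_le_iff] at h1
  exact hJ h1

lemma sob (u : ℂ → ℝ) (hc : Continuous u) (h0 : ∀ ζ, 0 ≤ u ζ) (hout : ∀ ζ, 1 ≤ ‖ζ‖ → u ζ = 0)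
    (hd : ∀ ζ, ‖ζ‖ < 1 → DifferentiableAt ℝ u ζ) (C : ℝ) (hC : ∀ ζ, u ζ ≤ C) (s : ℝ) (hs : 2 < s)
    (hJ : ∫⁻ x, ENNReal.ofReal (u x ^ (2 + 2 / s)) ∂muH ≠ ⊤) :
    ENNReal.ofReal (1 / (s - 2) * s ^ (s / (s + 1))) * (∫⁻ x, ENNReal.ofReal (u x ^ (2 + 2 / s)) ∂muH) ^ (s / (s + 1))
    ≤ (∫⁻ x, ENNReal.ofReal (u x ^ 2) ∂muH) + ENNReal.ofReal (1 / (s * (s - 2) * Real.pi)) *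
      ∫⁻ ζ in ball (0:ℂ) 1, ENNReal.ofReal (‖fderiv ℝ u ζ‖ ^ 2) := by
  have hpi := Real.pi_pos
  have hs0 : 0 < s := by linarith
  have hs2 : 0 < s - 2 := by linarith
  have hs1 : 0 < s + 1 := by linarith
  have he : 0 < s / (s + 1) := by positivity
  set J := ∫⁻ x, ENNReal.ofReal (u x ^ (2 + 2 / s)) ∂muH with hJdef
  set I2 := ∫⁻ x, ENNReal.ofReal (u x ^ 2) ∂muH with hI2
  set D := ∫⁻ ζ in ball (0:ℂ) 1, ENNReal.ofReal (‖fderiv ℝ u ζ‖ ^ 2) with hD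
  rcases eq_or_ne J 0 with hJ0 | hJ0
  · rw [hJ0, ENNReal.zero_rpow_of_pos he, mul_zero]; exact zero_le
  rcases eq_or_ne I2 ⊤ with hIt | hIt
  · rw [hIt]; simp
  rcases eq_or_ne D ⊤ with hDt | hDt
  · rw [hDt, ENNReal.mul_top]
    · simp
    · have : 0 < 1 / (s * (s - 2) * Real.pi) := by positivity
      simpa using this
  set j := J.toReal with hj
  have hj0 : 0 < j := ENNReal.toReal_pos hJ0 hJ
  have hJj : J = ENNReal.ofReal j := (ENNReal.ofReal_toReal hJ).symm
  set c := (1 / (s * j)) ^ (s / (2 * (s + 1))) with hcdef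
  have hc0 : 0 < c := Real.rpow_pos_of_pos (by positivity) _
  have hcp : c ^ (2 + 2 / s) = 1 / (s * j) := by
    rw [hcdef, ← Real.rpow_mul (by positivity)]
    have : s / (2 * (s + 1)) * (2 + 2 / s) = 1 := by field_simp
    rw [this, Real.rpow_one]
  have hc2 : c ^ 2 * (s ^ (s / (s + 1)) * j ^ (s / (s + 1))) = 1 := by
    rw [← Real.mul_rpow hs0.le hj0.le, hcdef, ← Real.rpow_natCast, ← Real.rpow_mul (by positivity)]
    have : s / (2 * (s + 1)) * ((2:ℕ):ℝ) = s / (s + 1) := by push_cast; field_simp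
    rw [this, ← Real.mul_rpow (by positivity) (by positivity)]
    have : 1 / (s * j) * (s * j) = 1 := by field_simp
    rw [this, Real.one_rpow]
  set w : ℂ → ℝ := fun ζ => c * u ζ with hw
  have hmass : ∫⁻ x, ENNReal.ofReal (w x ^ (2 + 2 / s)) ∂muH = ENNReal.ofReal (1 / s) := by
    have : ∀ x, ENNReal.ofReal (w x ^ (2 + 2 / s)) = ENNReal.ofReal (1 / (s * j)) * ENNReal.ofReal (u x ^ (2 + 2 / s)) := by
      intro x
      rw [hw, Real.mul_rpow hc0.le (h0 x), hcp, ENNReal.ofReal_mul (by positivity)]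
    simp only [this]
    rw [lintegral_const_mul' _ _ ENNReal.ofReal_ne_top, ← hJdef, hJj, ← ENNReal.ofReal_mul (by positivity)]
    congr 1; field_simp
  have hwc : Continuous w := continuous_const.mul hc
  have hfin : ∀ t > 0, Mf muH w t ≠ ⊤ := Mf_fin w hwc.measurable (2 + 2 / s) (by positivity) (by rw [hmass]; exact ENNReal.ofReal_ne_top)
  have hwd : ∀ ζ, ‖ζ‖ < 1 → DifferentiableAt ℝ w ζ := fun ζ hζ => (hd ζ hζ).const_mul c
  have core := core_abs muH w hwc.measurable (c * C) (fun x => mul_le_mul_of_nonneg_left (hC x) hc0.le)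
    (fun x => mul_nonneg hc0.le (h0 x)) hfin s hs hmass _
    (hI_lemma w hwc (fun ζ h => by rw [hw]; simp [hout ζ h]) hwd hfin)
  have hI2w : ∫⁻ x, ENNReal.ofReal (w x ^ 2) ∂muH = ENNReal.ofReal (c ^ 2) * I2 := by
    rw [hI2, ← lintegral_const_mul' _ _ ENNReal.ofReal_ne_top]
    refine lintegral_congr fun x => ?_
    rw [← ENNReal.ofReal_mul (by positivity), ← mul_pow]
  have hDw : ∫⁻ ζ in ball (0:ℂ) 1, ENNReal.ofReal (‖fderiv ℝ w ζ‖ ^ 2) = ENNReal.ofReal (c ^ 2) * D := by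
    rw [hD, ← lintegral_const_mul' _ _ ENNReal.ofReal_ne_top]
    refine setLIntegral_congr_fun measurableSet_ball fun ζ hζ => ?_
    rw [mem_ball_zero_iff] at hζ
    rw [← ENNReal.ofReal_mul (by positivity), ← mul_pow, hw, fderiv_const_mul (hd ζ hζ), norm_smul, Real.norm_of_nonneg hc0.le]
  rw [hI2w, hDw] at core
  set i := I2.toReal
  set d := D.toReal
  have hIi : I2 = ENNReal.ofReal i := (ENNReal.ofReal_toReal hIt).symm
  have hDd : D = ENNReal.ofReal d := (ENNReal.ofReal_toReal hDt).symm
  have hi0 : 0 ≤ i := ENNReal.toReal_nonneg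
  have hd0 : 0 ≤ d := ENNReal.toReal_nonneg
  rw [hIi, hDd, ← ENNReal.ofReal_mul (by positivity), ← ENNReal.ofReal_mul (by positivity), ← ENNReal.ofReal_mul (by positivity),
    ← ENNReal.ofReal_mul (by positivity), ← ENNReal.ofReal_mul (by positivity), ← ENNReal.ofReal_add (by positivity) (by positivity),
    ← ENNReal.ofReal_add (by positivity) (by positivity), ENNReal.ofReal_le_ofReal_iff (by positivity)] at core
  rw [hIi, hDd, hJj, ENNReal.ofReal_rpow_of_pos hj0, ← ENNReal.ofReal_mul (by positivity), ← ENNReal.ofReal_mul (by positivity),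
    ← ENNReal.ofReal_add (by positivity) (by positivity)]
  apply ENNReal.ofReal_le_ofReal
  set Q := s ^ (s / (s + 1)) * j ^ (s / (s + 1)) with hQ
  have hQ0 : 0 < Q := by positivity
  have e1 : s ≤ c ^ 2 * (d / Real.pi + s * (s - 2) * i) := by
    have : c ^ 2 * (d / Real.pi + s * (s - 2) * i) = 1 / Real.pi * (c ^ 2 * d) + s ^ 2 * (c ^ 2 * i) - 2 * s * (c ^ 2 * i) := by ring
    rw [this]; linarith
  have e2 : s * Q ≤ d / Real.pi + s * (s - 2) * i := by
    calc s * Q ≤ c ^ 2 * (d / Real.pi + s * (s - 2) * i) * Q := by gcongr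
      _ = (c ^ 2 * Q) * (d / Real.pi + s * (s - 2) * i) := by ring
      _ = _ := by rw [hc2, one_mul]
  have e3 : 1 / (s - 2) * s ^ (s / (s + 1)) * j ^ (s / (s + 1)) = (s * Q) / (s * (s - 2)) := by
    rw [hQ]; field_simp
  have e4 : i + 1 / (s * (s - 2) * Real.pi) * d = (d / Real.pi + s * (s - 2) * i) / (s * (s - 2)) := by
    field_simp; ring
  rw [e3, e4]
  gcongr

lemma lint_nu (k : ℝ) (hk : 1 / 2 < k) (g : ℂ → ENNReal) :
    ∫⁻ ζ, g ζ ∂(nuMeasure k) = ENNReal.ofReal (2 * k - 1) * ∫⁻ ζ, g ζ ∂muH := by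
  have hpi := Real.pi_pos
  have h1 : nuMeasure k = ENNReal.ofReal (2 * k - 1) • muH := by
    unfold nuMeasure muH
    rw [← withDensity_smul _ dens_meas]
    congr 1
    funext ζ
    rw [Pi.smul_apply, smul_eq_mul, ← ENNReal.ofReal_mul (by linarith)]
    congr 1
    field_simp
  rw [h1, lintegral_smul_measure, smul_eq_mul]

/-- Sharp Sobolev inequality on the hyperbolic plane (Theorem 3.2, inequality part):
for bounded `f` on the disc vanishing at the boundary, with `|f|^{q/2}` differentiable
with finite Dirichlet energy and `∫ |f|^p dν_k < ∞`, where `p = q + 1/k`,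
`∫|f|^q dν_k + (4/(kq(kq−2)))·((2k−1)/(4π))∫|∇|f|^{q/2}|² dA`
`  ≥ ((2k−1)/(kq−1))·((kp−1)/(2k−1))^{q/p}·((kq−1)/(kq−2))·(∫|f|^p dν_k)^{q/p}`.
(The left-hand side is interpreted in `[0,∞]` so that the inequality also covers the
case `∫ |f|^q dν_k = ∞`.) -/
theorem sharp_sobolev_inequality
    (k q p : ℝ) (hk : 1 / 2 < k) (hq : 2 ≤ q) (hkq : 2 < k * q)
    (hp : p = q + 1 / k)
    (f : ℂ → ℂ)
    (hbd : ∃ C, ∀ ζ ∈ ball (0 : ℂ) 1, ‖f ζ‖ ≤ C)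
    (hlim : ∀ ε > 0, ∃ r < 1, ∀ ζ ∈ ball (0 : ℂ) 1, r < ‖ζ‖ → ‖f ζ‖ < ε)
    (hdiff : ∀ ζ ∈ ball (0 : ℂ) 1, DifferentiableAt ℝ (fun z => ‖f z‖ ^ (q / 2)) ζ)
    (hgrad : ∫⁻ ζ in ball (0 : ℂ) 1,
        ENNReal.ofReal (‖fderiv ℝ (fun z => ‖f z‖ ^ (q / 2)) ζ‖ ^ 2) ≠ ⊤)
    (hLp : ∫⁻ ζ, ENNReal.ofReal (‖f ζ‖ ^ p) ∂(nuMeasure k) ≠ ⊤) :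
    ENNReal.ofReal ((2 * k - 1) / (k * q - 1) * ((k * p - 1) / (2 * k - 1)) ^ (q / p)
          * ((k * q - 1) / (k * q - 2)))
        * (∫⁻ ζ, ENNReal.ofReal (‖f ζ‖ ^ p) ∂(nuMeasure k)) ^ (q / p)
      ≤ (∫⁻ ζ, ENNReal.ofReal (‖f ζ‖ ^ q) ∂(nuMeasure k))
        + ENNReal.ofReal (4 / (k * q * (k * q - 2)) * ((2 * k - 1) / (4 * Real.pi)))
          * ∫⁻ ζ in ball (0 : ℂ) 1,
              ENNReal.ofReal (‖fderiv ℝ (fun z => ‖f z‖ ^ (q / 2)) ζ‖ ^ 2) := by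
  have hpi := Real.pi_pos
  have hk0 : 0 < k := by linarith
  have hq0 : 0 < q := by linarith
  have hκ : 0 < 2 * k - 1 := by linarith
  set v : ℂ → ℝ := fun z => ‖f z‖ ^ (q / 2) with hv
  have hv0 : ∀ z, 0 ≤ v z := fun z => Real.rpow_nonneg (norm_nonneg _) _
  set u : ℂ → ℝ := (ball (0:ℂ) 1).indicator v with hu
  have huin : ∀ ζ, ‖ζ‖ < 1 → u ζ = v ζ := fun ζ h => Set.indicator_of_mem (mem_ball_zero_iff.2 h) v
  have huout : ∀ ζ, 1 ≤ ‖ζ‖ → u ζ = 0 := fun ζ h => Set.indicator_of_notMem (by rw [mem_ball_zero_iff]; exact not_lt.2 h) v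
  have hu0 : ∀ ζ, 0 ≤ u ζ := fun ζ => Set.indicator_nonneg (fun z _ => hv0 z) ζ
  have hev : ∀ ζ, ‖ζ‖ < 1 → u =ᶠ[nhds ζ] v := by
    intro ζ h
    filter_upwards [isOpen_ball.mem_nhds (mem_ball_zero_iff.2 h)] with y hy
    exact huin y (mem_ball_zero_iff.1 hy)
  have hud : ∀ ζ, ‖ζ‖ < 1 → DifferentiableAt ℝ u ζ := fun ζ h =>
    (hdiff ζ (mem_ball_zero_iff.2 h)).congr_of_eventuallyEq (hev ζ h)
  have hfd : ∀ ζ, ‖ζ‖ < 1 → fderiv ℝ u ζ = fderiv ℝ v ζ := fun ζ h => (hev ζ h).fderiv_eq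
  have huc : Continuous u := by
    rw [continuous_iff_continuousAt]
    intro ζ
    rcases lt_or_ge ‖ζ‖ 1 with h | h
    · exact (hud ζ h).continuousAt
    · rw [Metric.continuousAt_iff']
      intro ε hε
      obtain ⟨r, hr, hr2⟩ := hlim (ε ^ (2 / q)) (Real.rpow_pos_of_pos hε _)
      have ho : {y : ℂ | r < ‖y‖} ∈ nhds ζ := (isOpen_lt continuous_const continuous_norm).mem_nhds (lt_of_lt_of_le hr h)
      filter_upwards [ho] with y hy
      have hy' : r < ‖y‖ := hy
      rw [huout ζ h, Real.dist_eq, sub_zero, abs_of_nonneg (hu0 y)]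
      rcases lt_or_ge ‖y‖ 1 with h1 | h1
      · rw [huin y h1, hv]
        have h2 := Real.rpow_lt_rpow (norm_nonneg _) (hr2 y (mem_ball_zero_iff.2 h1) hy') (by positivity : 0 < q / 2)
        rw [← Real.rpow_mul hε.le] at h2
        have : 2 / q * (q / 2) = 1 := by field_simp
        rwa [this, Real.rpow_one] at h2
      · rw [huout y h1]; exact hε
  obtain ⟨C, hC⟩ := hbd
  have huC : ∀ ζ, u ζ ≤ (max C 0) ^ (q / 2) := by
    intro ζ
    rcases lt_or_ge ‖ζ‖ 1 with h | h
    · rw [huin ζ h]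
      exact Real.rpow_le_rpow (norm_nonneg _) ((hC ζ (mem_ball_zero_iff.2 h)).trans (le_max_left _ _)) (by positivity)
    · rw [huout ζ h]; exact Real.rpow_nonneg (le_max_right _ _) _
  set s := k * q with hsdef
  have hs0 : 0 < s := by linarith
  have hs2 : 0 < s - 2 := by linarith
  have hs1 : 0 < s - 1 := by linarith
  have hIp : ∫⁻ ζ, ENNReal.ofReal (‖f ζ‖ ^ p) ∂muH = ∫⁻ x, ENNReal.ofReal (u x ^ (2 + 2 / s)) ∂muH := by
    apply lintegral_congr_ae
    filter_upwards [ae_muH] with ζ hζ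
    rw [huin ζ hζ, hv, ← Real.rpow_mul (norm_nonneg _), hp, hsdef]
    congr 2
    field_simp
  have hIq : ∫⁻ ζ, ENNReal.ofReal (‖f ζ‖ ^ q) ∂muH = ∫⁻ x, ENNReal.ofReal (u x ^ 2) ∂muH := by
    apply lintegral_congr_ae
    filter_upwards [ae_muH] with ζ hζ
    rw [huin ζ hζ, hv, ← Real.rpow_natCast, ← Real.rpow_mul (norm_nonneg _)]
    congr 2
    push_cast
    field_simp
  have hDD : ∫⁻ ζ in ball (0:ℂ) 1, ENNReal.ofReal (‖fderiv ℝ v ζ‖ ^ 2) = ∫⁻ ζ in ball (0:ℂ) 1, ENNReal.ofReal (‖fderiv ℝ u ζ‖ ^ 2) := by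
    refine setLIntegral_congr_fun measurableSet_ball fun ζ hζ => ?_
    rw [hfd ζ (mem_ball_zero_iff.1 hζ)]
  rw [lint_nu k hk, hIp] at hLp
  rw [lint_nu k hk, lint_nu k hk, hIp, hIq, hDD]
  have hJ : ∫⁻ x, ENNReal.ofReal (u x ^ (2 + 2 / s)) ∂muH ≠ ⊤ := by
    intro h
    rw [h, ENNReal.mul_top (by simpa using hκ)] at hLp
    exact hLp rfl
  have main := mul_le_mul_right (sob u huc hu0 huout hud _ huC s hkq hJ) (ENNReal.ofReal (2 * k - 1))
  have hqp : q / p = s / (s + 1) := by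
    rw [hp, hsdef]; field_simp
  have hkp : k * p - 1 = s := by
    rw [hp, hsdef]; field_simp; ring
  have he : 0 < s / (s + 1) := by positivity
  rw [hqp, hkp, ENNReal.mul_rpow_of_nonneg _ _ he.le, ENNReal.ofReal_rpow_of_pos hκ, ← mul_assoc, ← ENNReal.ofReal_mul (by positivity)]
  rw [mul_add, ← mul_assoc, ← mul_assoc, ← ENNReal.ofReal_mul hκ.le, ← ENNReal.ofReal_mul hκ.le] at main
  have c1 : (2 * k - 1) / (s - 1) * (s / (2 * k - 1)) ^ (s / (s + 1)) * ((s - 1) / (s - 2)) * (2 * k - 1) ^ (s / (s + 1))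
      = (2 * k - 1) * (1 / (s - 2) * s ^ (s / (s + 1))) := by
    rw [Real.div_rpow hs0.le hκ.le]
    have : 0 < (2 * k - 1) ^ (s / (s + 1)) := Real.rpow_pos_of_pos hκ _
    field_simp
  have c2 : 4 / (s * (s - 2)) * ((2 * k - 1) / (4 * Real.pi)) = (2 * k - 1) * (1 / (s * (s - 2) * Real.pi)) := by
    field_simp
  rw [c1, c2]
  exact main
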